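/- Fix an integer k ≥ 4. Then as x → ∞, the number of integers n with 1 ≤ n ≤ x for which the equivalence "n is k-free if and only if s(n) is k-free" fails is o(x). In other words, on a set of positive integers n of asymptotic density 1, n is k-free if and only if s(n) is k-free. -/

import Mathlib

open scoped Classical
open Filter Finset

/-- `sigma1 n` is `σ(n)`, the sum of all positive divisors of `n`. -/
def sigma1 (n : ℕ) : ℕ := ArithmeticFunction.sigma 1 n

/-- `s n` is the sum of the proper divisors of `n`, i.e. `σ(n) − n`. -/
def s (n : ℕ) : ℕ := sigma1 n - n

/-- A positive integer `n` is `k`-free if no `k`-th power of a prime divides it. -/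
def KFree (k n : ℕ) : Prop := ∀ p : ℕ, p.Prime → ¬ p ^ k ∣ n
/-- number of `1 ≤ n ≤ N` with `P n`. -/
noncomputable def cnt (N : ℕ) (P : ℕ → Prop) : ℝ := (((Finset.Icc 1 N).filter P).card : ℝ)

lemma cnt_nonneg (N : ℕ) (P : ℕ → Prop) : 0 ≤ cnt N P := by
  unfold cnt; positivity

lemma cnt_mono {N : ℕ} {P Q : ℕ → Prop} (h : ∀ n, 1 ≤ n → n ≤ N → P n → Q n) :
    cnt N P ≤ cnt N Q := by
  unfold cnt
  norm_cast
  apply Finset.card_le_card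
  intro n hn
  simp only [Finset.mem_filter, Finset.mem_Icc] at hn ⊢
  exact ⟨hn.1, h n hn.1.1 hn.1.2 hn.2⟩

lemma cnt_or (N : ℕ) (P Q : ℕ → Prop) :
    cnt N (fun n => P n ∨ Q n) ≤ cnt N P + cnt N Q := by
  unfold cnt
  norm_cast
  refine le_trans (Finset.card_le_card ?_) (Finset.card_union_le _ _)
  intro n hn
  simp only [Finset.mem_filter, Finset.mem_union] at hn ⊢
  tauto

lemma cnt_mul_le (N : ℕ) (P : ℕ → Prop) (c : ℝ) (g : ℕ → ℝ) (hg : ∀ n, 0 ≤ g n)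
    (h : ∀ n, 1 ≤ n → n ≤ N → P n → c ≤ g n) : cnt N P * c ≤ ∑ n ∈ Finset.Icc 1 N, g n := by
  unfold cnt
  rw [← nsmul_eq_mul, ← Finset.sum_const]
  refine (Finset.sum_le_sum (g := g) ?_).trans
    (Finset.sum_le_sum_of_subset_of_nonneg (Finset.filter_subset _ _) fun _ _ _ => hg _)
  intro n hn
  simp only [Finset.mem_filter, Finset.mem_Icc] at hn
  exact h n hn.1.1 hn.1.2 hn.2

lemma cnt_exists (N : ℕ) {ι : Type*} (J : Finset ι) (P : ι → ℕ → Prop) :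
    cnt N (fun n => ∃ j ∈ J, P j n) ≤ ∑ j ∈ J, cnt N (P j) := by
  unfold cnt
  norm_cast
  refine le_trans (Finset.card_le_card ?_) (Finset.card_biUnion_le (s := J)
    (t := fun j => (Finset.Icc 1 N).filter (P j)))
  intro n hn
  simp only [Finset.mem_filter, Finset.mem_biUnion] at hn ⊢
  obtain ⟨h1, j, hj, h2⟩ := hn
  exact ⟨j, hj, h1, h2⟩

lemma card_dvd (N d : ℕ) : ((Finset.Icc 1 N).filter (fun n => d ∣ n)).card = N / d := by
  have := Nat.Ioc_filter_dvd_card_eq_div N d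
  rw [← this]
  congr 1

lemma cnt_dvd_eq (N d : ℕ) : cnt N (fun n => d ∣ n) = ((N / d : ℕ) : ℝ) := by
  unfold cnt
  rw [← card_dvd N d]
  congr!

lemma cnt_dvd (N d : ℕ) : cnt N (fun n => d ∣ n) ≤ N / d := by
  rw [cnt_dvd_eq]
  exact Nat.cast_div_le

lemma sum_inv_sq_le (T N : ℕ) (hT : 1 ≤ T) :
    ∑ b ∈ Finset.Ioc T N, (1 : ℝ) / (b : ℝ) ^ 2 ≤ 1 / T := by
  rcases le_total T N with h | h
  · have := sum_Ioc_inv_sq_le_sub (α := ℝ) (k := T) (n := N) (by omega) h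
    simp only [one_div]
    refine this.trans ?_
    have : (0 : ℝ) ≤ (N : ℝ)⁻¹ := by positivity
    linarith
  · rw [Finset.Ioc_eq_empty (by omega)]; simp

lemma cnt_sq (N T : ℕ) (hT : 1 ≤ T) :
    cnt N (fun n => ∃ b, T < b ∧ b ^ 2 ∣ n) ≤ N / T := by
  have h1 : cnt N (fun n => ∃ b, T < b ∧ b ^ 2 ∣ n) ≤
      cnt N (fun n => ∃ b ∈ Finset.Ioc T N, b ^ 2 ∣ n) := by
    apply cnt_mono
    rintro n hn hN ⟨b, hb, hd⟩
    refine ⟨b, ?_, hd⟩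
    have := Nat.le_of_dvd hn hd
    have : b ≤ b ^ 2 := Nat.le_self_pow (by norm_num) b
    simp; omega
  refine h1.trans ((cnt_exists N _ _).trans ?_)
  calc ∑ b ∈ Finset.Ioc T N, cnt N (fun n => b ^ 2 ∣ n)
      ≤ ∑ b ∈ Finset.Ioc T N, (N : ℝ) * (1 / (b : ℝ) ^ 2) := by
        apply Finset.sum_le_sum
        intro b _
        refine (cnt_dvd N (b ^ 2)).trans (le_of_eq ?_)
        push_cast; ring
    _ = N * ∑ b ∈ Finset.Ioc T N, (1 : ℝ) / (b : ℝ) ^ 2 := by rw [Finset.mul_sum]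
    _ ≤ N * (1 / T) := by
        apply mul_le_mul_of_nonneg_left (sum_inv_sq_le T N hT) (by positivity)
    _ = N / T := by ring

/-- Turan inequality. -/
lemma turan (N : ℕ) (S : Finset ℕ) (hS : ∀ q ∈ S, q.Prime) :
    cnt N (fun n => ∀ q ∈ S, ¬ q ∣ n) * (∑ q ∈ S, (1 : ℝ) / q) ≤ N + 2 * S.card := by
  set E : ℝ := ∑ q ∈ S, (1 : ℝ) / q with hE
  have hE0 : 0 ≤ E := by positivity
  let f : ℕ → ℝ := fun n => ∑ q ∈ S, if q ∣ n then (1 : ℝ) else 0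
  have hcard : ∀ d : ℕ, ∑ n ∈ Finset.Icc 1 N, (if d ∣ n then (1 : ℝ) else 0) = ((N / d : ℕ) : ℝ) := by
    intro d
    rw [← card_dvd N d, Finset.sum_ite]
    simp
  -- first moment
  have h1 : ∑ n ∈ Finset.Icc 1 N, f n ≥ N * E - S.card := by
    have : ∑ n ∈ Finset.Icc 1 N, f n = ∑ q ∈ S, ((N / q : ℕ) : ℝ) := by
      simp only [f]
      rw [Finset.sum_comm]
      exact Finset.sum_congr rfl fun q _ => hcard q
    rw [this, hE, Finset.mul_sum, Finset.card_eq_sum_ones]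
    push_cast
    rw [← Finset.sum_sub_distrib]
    apply Finset.sum_le_sum
    intro q hq
    have hq0 : 0 < q := (hS q hq).pos
    have : (N : ℝ) / q < (N / q : ℕ) + 1 := by
      rw [div_lt_iff₀ (by positivity)]
      have := Nat.lt_div_mul_add (a := N) hq0
      have h2 : N < (N / q + 1) * q := by rw [add_mul]; omega
      exact_mod_cast h2
    rw [mul_one_div]; linarith
  have h2 : ∑ n ∈ Finset.Icc 1 N, f n ^ 2 ≤ N * E ^ 2 + N * E := by
    have e : ∀ n, f n ^ 2 = ∑ q ∈ S, ∑ r ∈ S,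
        (if q ∣ n then (1 : ℝ) else 0) * (if r ∣ n then (1 : ℝ) else 0) := by
      intro n
      simp only [f, sq, Finset.sum_mul_sum]
    simp only [e]
    rw [Finset.sum_comm]
    have : ∀ q ∈ S, ∑ n ∈ Finset.Icc 1 N, ∑ r ∈ S,
        (if q ∣ n then (1 : ℝ) else 0) * (if r ∣ n then (1 : ℝ) else 0)
        ≤ N * (1 / q) * E + N * (1 / q) := by
      intro q hq
      rw [Finset.sum_comm]
      have hb : ∀ r ∈ S, ∑ n ∈ Finset.Icc 1 N,
          (if q ∣ n then (1 : ℝ) else 0) * (if r ∣ n then (1 : ℝ) else 0)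
          ≤ N * (1 / q) * (1 / r) + if r = q then N * (1 / (q : ℝ)) else 0 := by
        intro r hr
        split_ifs with h
        · subst h
          have : ∀ n, (if r ∣ n then (1 : ℝ) else 0) * (if r ∣ n then (1 : ℝ) else 0)
              = if r ∣ n then (1 : ℝ) else 0 := by intro n; split_ifs <;> simp
          simp only [this]
          rw [hcard]
          have := Nat.cast_div_le (α := ℝ) (m := N) (n := r)
          have h3 : (0 : ℝ) ≤ N * (1 / r) * (1 / r) := by positivity
          rw [← mul_one_div] at this
          linarith
        · have : ∀ n, (if q ∣ n then (1 : ℝ) else 0) * (if r ∣ n then (1 : ℝ) else 0)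
              = if q * r ∣ n then (1 : ℝ) else 0 := by
            intro n
            have hco : Nat.Coprime q r := (Nat.coprime_primes (hS q hq) (hS r hr)).2 (Ne.symm h)
            have : q * r ∣ n ↔ q ∣ n ∧ r ∣ n :=
              ⟨fun hh => ⟨(dvd_mul_right _ _).trans hh, (dvd_mul_left _ _).trans hh⟩,
                fun hh => hco.mul_dvd_of_dvd_of_dvd hh.1 hh.2⟩
            simp only [this]
            split_ifs <;> simp_all
          simp only [this]
          rw [hcard]
          have := Nat.cast_div_le (α := ℝ) (m := N) (n := q * r)
          push_cast at this
          refine this.trans (le_of_eq ?_)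
          rw [div_eq_mul_inv, mul_inv]; simp; ring
      refine (Finset.sum_le_sum hb).trans ?_
      rw [Finset.sum_add_distrib, ← Finset.mul_sum, Finset.sum_ite_eq' S q]
      simp [hq, hE]
    refine (Finset.sum_le_sum this).trans (le_of_eq ?_)
    rw [Finset.sum_add_distrib, ← Finset.sum_mul, ← Finset.mul_sum]
    ring
  have h3 : cnt N (fun n => ∀ q ∈ S, ¬ q ∣ n) * E ^ 2 ≤ ∑ n ∈ Finset.Icc 1 N, (f n - E) ^ 2 := by
    apply cnt_mul_le _ _ _ _ (fun _ => sq_nonneg _)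
    intro n _ _ hn
    have : f n = 0 := by
      apply Finset.sum_eq_zero
      intro q hq
      rw [if_neg (hn q hq)]
    simp [this]
  have h4 : ∑ n ∈ Finset.Icc 1 N, (f n - E) ^ 2 ≤ N * E + 2 * E * S.card := by
    have : ∑ n ∈ Finset.Icc 1 N, (f n - E) ^ 2
        = ∑ n ∈ Finset.Icc 1 N, f n ^ 2 - 2 * E * ∑ n ∈ Finset.Icc 1 N, f n + N * E ^ 2 := by
      simp only [sub_sq]
      rw [Finset.sum_add_distrib, Finset.sum_sub_distrib]
      simp only [Finset.sum_const, Nat.card_Icc, nsmul_eq_mul, Finset.mul_sum]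
      congr 1
      · congr 1
        apply Finset.sum_congr rfl; intros; ring
    rw [this]
    have := mul_le_mul_of_nonneg_left h1 (by positivity : 0 ≤ 2 * E)
    nlinarith
  rcases hE0.eq_or_lt with h | h
  · rw [← h]; simp; positivity
  · have : (cnt N (fun n => ∀ q ∈ S, ¬ q ∣ n) * E) * E ≤ (N + 2 * S.card) * E := by nlinarith
    exact le_of_mul_le_mul_right this h
open ArithmeticFunction.vonMangoldt in
lemma not_summable_prime_residue {q : ℕ} [NeZero q] {a : ZMod q} (ha : IsUnit a) :
    ¬ Summable fun n : ℕ => if n.Prime ∧ (n : ZMod q) = a then (1 : ℝ) / n else 0 := by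
  intro H
  set g : ℕ → ℝ := fun n : ℕ => if n.Prime ∧ (n : ZMod q) = a then (1 : ℝ) / n else 0 with hg
  have hg0 : ∀ n, 0 ≤ g n := by
    intro n; simp only [hg]; split_ifs <;> positivity
  have hq : 0 < (q.totient : ℝ)⁻¹ := inv_pos.mpr (mod_cast q.totient.pos_of_neZero)
  set c := (q.totient : ℝ)⁻¹ with hc
  obtain ⟨F, hF⟩ : ∃ F : Finset ℕ, ∑' n, g n - ∑ n ∈ F, g n ≤ c / 2 := by
    have := H.hasSum.eventually (lt_mem_nhds (show ∑' n, g n - c / 2 < ∑' n, g n by linarith))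
    obtain ⟨F, hF⟩ := this.exists
    exact ⟨F, by linarith⟩
  have hh := summable_residueClass_non_primes_div a
  set h : ℕ → ℝ := fun n : ℕ ↦ (if n.Prime then 0 else residueClass a n) / n with hhdef
  have hh0 : ∀ n, 0 ≤ h n := by
    intro n
    simp only [hhdef]
    have := residueClass_nonneg a n
    positivity
  let w : ℕ → ℝ := fun n => if n ∈ F then residueClass a n / n else 0
  have hw0 : ∀ n, 0 ≤ w n := by
    intro n
    simp only [w]
    have := residueClass_nonneg a n
    split_ifs <;> positivity
  have hw : Summable w := by
    apply summable_of_ne_finset_zero (s := F)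
    intro n hn
    simp only [w]; rw [if_neg hn]
  let v : ℕ → ℝ := fun n => g n - if n ∈ F then g n else 0
  have hv0 : ∀ n, 0 ≤ v n := by
    intro n
    simp only [v]
    split_ifs <;> simp [hg0]
  have hFs : Summable fun n => if n ∈ F then g n else 0 := by
    apply summable_of_ne_finset_zero (s := F)
    intro n hn
    rw [if_neg hn]
  have hv : Summable v := H.sub hFs
  have hvt : ∑' n, v n ≤ c / 2 := by
    have : ∑' n, v n = ∑' n, g n - ∑' n, (if n ∈ F then g n else 0) := H.tsum_sub hFs
    rw [this]
    have e : ∑' n, (if n ∈ F then g n else 0) = ∑ n ∈ F, g n := by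
      rw [tsum_eq_sum (s := F)]
      · apply Finset.sum_congr rfl; intro n hn; rw [if_pos hn]
      · intro n hn; rw [if_neg hn]
    rw [e]; exact hF
  have key : ∀ x : ℝ, x ∈ Set.Ioc (1 : ℝ) 2 →
      ∑' n, residueClass a n / (n : ℝ) ^ x ≤ ∑' n, h n + ∑' n, w n + (c / 2) / (x - 1) := by
    intro x hx
    have hx1 : 0 < x - 1 := sub_pos.2 hx.1
    have hs : Summable fun n : ℕ => residueClass a n / (n : ℝ) ^ x :=
      LSeries.summable_real_of_abscissaOfAbsConv_lt <|
        (abscissaOfAbsConv_residueClass_le_one a).trans_lt <| mod_cast hx.1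
    calc ∑' n, residueClass a n / (n : ℝ) ^ x ≤ ∑' n, (h n + w n + v n / (x - 1)) := by
          refine Summable.tsum_le_tsum (fun n => ?_) hs ((hh.add hw).add (hv.div_const _))
          rcases n.eq_zero_or_pos with rfl | hn
          · simp
            have h1 := hh0 0; have h2 := hw0 0; have h3 := div_nonneg (hv0 0) hx1.le
            linarith
          have hnx : residueClass a n / (n : ℝ) ^ x ≤ residueClass a n / n := by
            refine div_le_div_of_nonneg_left (residueClass_nonneg a _) (mod_cast hn) ?_
            conv_lhs => rw [← Real.rpow_one n]
            exact Real.rpow_le_rpow_of_exponent_le (by norm_cast) hx.1.le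
          have h1 := hh0 n; have h2 := hw0 n; have h3 := div_nonneg (hv0 n) hx1.le
          by_cases hp : n.Prime
          · by_cases hnF : n ∈ F
            · have : w n = residueClass a n / n := by simp only [w]; rw [if_pos hnF]
              linarith
            · by_cases hna : (n : ZMod q) = a
              · have hv' : v n = 1 / n := by
                  simp only [v, hg]; rw [if_neg hnF, if_pos ⟨hp, hna⟩]; ring
                have hr : residueClass a n = Real.log n := by
                  have hm : n ∈ {n : ℕ | (n : ZMod q) = a} := by simpa using hna
                  unfold residueClass
                  rw [Set.indicator_of_mem hm]
                  exact ArithmeticFunction.vonMangoldt_apply_prime hp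
                have hn0 : (0 : ℝ) < n := by exact_mod_cast hn
                have : residueClass a n / (n : ℝ) ^ x ≤ v n / (x - 1) := by
                  rw [hv', hr]
                  have e1 : (n : ℝ) ^ x = n * (n : ℝ) ^ (x - 1) := by
                    conv_rhs => rw [← Real.rpow_one_add' hn0.le (by linarith)]
                    congr 1; ring
                  have e2 : (x - 1) * Real.log n ≤ (n : ℝ) ^ (x - 1) := by
                    rw [Real.rpow_def_of_pos hn0]
                    have := Real.add_one_le_exp (Real.log n * (x - 1))
                    linarith
                  have e3 : 0 < (n : ℝ) ^ (x - 1) := Real.rpow_pos_of_pos hn0 _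
                  rw [e1, div_div, div_le_div_iff₀ (by positivity) (by positivity)]
                  nlinarith
                linarith
              · have hr : residueClass a n = 0 := by
                  have hm : n ∉ {n : ℕ | (n : ZMod q) = a} := by simpa using hna
                  unfold residueClass
                  rw [Set.indicator_of_notMem hm]
                rw [hr, zero_div]; linarith
          · have : h n = residueClass a n / n := by simp only [hhdef]; rw [if_neg hp]
            linarith
      _ = ∑' n, h n + ∑' n, w n + (∑' n, v n) / (x - 1) := by
          rw [(hh.add hw).tsum_add (hv.div_const _), hh.tsum_add hw, tsum_div_const]
      _ ≤ _ := by gcongr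
  obtain ⟨C', hC'⟩ := LSeries_residueClass_lower_bound ha
  set K := ∑' n, h n + ∑' n, w n + C' with hK
  have fin : ∀ x : ℝ, x ∈ Set.Ioc (1 : ℝ) 2 → c / 2 ≤ K * (x - 1) := by
    intro x hx
    have hx1 : 0 < x - 1 := sub_pos.2 hx.1
    have h1 := hC' hx
    have h2 := key x hx
    have h3 : (c / 2) / (x - 1) ≤ K := by
      have : c / (x - 1) = (c / 2) / (x - 1) + (c / 2) / (x - 1) := by ring
      rw [← hc] at h1
      linarith
    rwa [div_le_iff₀ hx1] at h3
  rcases le_or_gt K 0 with h0 | h0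
  · have := fin 2 (by simp)
    norm_num at this; linarith
  · have h1 := fin (min (1 + c / K / 4) 2) ⟨by simp; positivity, min_le_right _ _⟩
    have h2 : min (1 + c / K / 4) 2 - 1 ≤ c / K / 4 := by
      have := min_le_left (1 + c / K / 4) 2; linarith
    have h3 := mul_le_mul_of_nonneg_left h2 h0.le
    have h4 : K * (c / K / 4) = c / 4 := by field_simp
    linarith

lemma exists_primes_dvd_succ (D T : ℕ) (hD : 1 ≤ D) (K : ℝ) :
    ∃ S : Finset ℕ, (∀ q ∈ S, q.Prime ∧ T < q ∧ D ∣ q + 1) ∧ K ≤ ∑ q ∈ S, (1 : ℝ) / q := by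
  have : NeZero D := ⟨by omega⟩
  have h := not_summable_prime_residue (q := D) (a := -1) (isUnit_one.neg)
  rw [not_summable_iff_tendsto_nat_atTop_of_nonneg (by intro n; split_ifs <;> positivity)] at h
  obtain ⟨M, hM⟩ := (h.eventually_ge_atTop (K + (T + 1))).exists
  refine ⟨(Finset.range M).filter (fun q => q.Prime ∧ T < q ∧ D ∣ q + 1), ?_, ?_⟩
  · intro q hq; exact (Finset.mem_filter.1 hq).2
  · rw [Finset.sum_filter]
    have : ∑ i ∈ Finset.range M, (if Nat.Prime i ∧ (i : ZMod D) = -1 then (1 : ℝ) / i else 0)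
        ≤ ∑ i ∈ Finset.range M, ((if i.Prime ∧ T < i ∧ D ∣ i + 1 then (1 : ℝ) / i else 0)
          + if i ∈ Finset.range (T + 1) then 1 else 0) := by
      apply Finset.sum_le_sum
      intro i _
      have hi : (i : ZMod D) = -1 ↔ D ∣ i + 1 := by
        rw [← ZMod.natCast_eq_zero_iff]
        push_cast
        rw [eq_neg_iff_add_eq_zero]
      by_cases h1 : i.Prime ∧ (i : ZMod D) = -1
      · rw [if_pos h1]
        by_cases h2 : T < i
        · rw [if_pos ⟨h1.1, h2, hi.1 h1.2⟩]
          have : (0 : ℝ) ≤ if i ∈ Finset.range (T + 1) then 1 else 0 := by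
            split_ifs <;> norm_num
          linarith
        · have h3 : i ∈ Finset.range (T + 1) := by simp; omega
          rw [if_pos h3]
          have h4 : (1 : ℝ) / i ≤ 1 := by
            rw [div_le_one (by exact_mod_cast h1.1.pos)]
            exact_mod_cast h1.1.one_lt.le
          have : (0 : ℝ) ≤ if i.Prime ∧ T < i ∧ D ∣ i + 1 then (1 : ℝ) / i else 0 := by
            split_ifs <;> positivity
          linarith
      · rw [if_neg h1]
        split_ifs <;> positivity
    rw [Finset.sum_add_distrib] at this
    have h5 : ∑ i ∈ Finset.range M, (if i ∈ Finset.range (T + 1) then (1 : ℝ) else 0) ≤ T + 1 := by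
      rw [← Finset.sum_filter, Finset.sum_const, nsmul_eq_mul, mul_one]
      have : (Finset.filter (fun i => i ∈ Finset.range (T + 1)) (Finset.range M)).card ≤ T + 1 := by
        conv_rhs => rw [← Finset.card_range (T + 1)]
        apply Finset.card_le_card
        intro i hi
        exact (Finset.mem_filter.1 hi).2
      exact_mod_cast this
    linarith
lemma log16_lt : Real.log 16 < 3 := by
  have : (16 : ℝ) = 2 ^ 4 := by norm_num
  rw [this, Real.log_pow]
  have := Real.log_two_lt_d9
  push_cast; linarith

lemma prime_block : ∃ J : ℕ, ∀ j, J ≤ j →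
    (1 : ℝ) / (48 * (j + 1)) ≤
      ∑ q ∈ (Finset.Ioc (16 ^ j) (16 ^ (j + 1))).filter Nat.Prime, (1 : ℝ) / q := by
  have h1 : ∀ᶠ y : ℝ in atTop, Real.log (y + 1) + 2 * √y * Real.log y ≤ y / 2 := by
    have a1 := (isLittleO_log_rpow_atTop (show (0 : ℝ) < 1 / 2 by norm_num)).bound
      (show (0 : ℝ) < 1 / 16 by norm_num)
    filter_upwards [a1, eventually_ge_atTop 16] with y hy hy1
    have hl : 0 ≤ Real.log y := Real.log_nonneg (by linarith)
    rw [← Real.sqrt_eq_rpow, Real.norm_of_nonneg hl, Real.norm_of_nonneg (Real.sqrt_nonneg y)] at hy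
    have hs := Real.sq_sqrt (show 0 ≤ y by linarith)
    have hs4 : 4 ≤ √y := by
      rw [Real.le_sqrt (by norm_num) (by linarith)]; linarith
    have : Real.log (y + 1) ≤ Real.log y + Real.log y := by
      rw [← Real.log_mul (by linarith) (by linarith)]
      apply Real.log_le_log (by linarith); nlinarith
    nlinarith
  have h2 : Tendsto (fun j : ℕ => (16 : ℝ) ^ (j + 1)) atTop atTop :=
    (tendsto_pow_atTop_atTop_of_one_lt (by norm_num)).comp (tendsto_add_atTop_nat 1)
  obtain ⟨J, hJ⟩ := eventually_atTop.1 (h2.eventually h1)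
  refine ⟨J, fun j hj => ?_⟩
  have hb := hJ j hj
  have hlow := Chebyshev.theta_ge (16 ^ (j + 1))
  have hup := Chebyshev.theta_le_log4_mul_x (x := 16 ^ j) (by positivity)
  push_cast at hlow
  set M : ℝ := 16 ^ (j + 1) with hM
  have hM16 : (16 : ℝ) ^ j = M / 16 := by rw [hM, pow_succ]; ring
  have hM0 : 0 < M := by positivity
  rw [hM16] at hup
  have hl4 : Real.log 4 = 2 * Real.log 2 := by
    rw [show (4 : ℝ) = 2 ^ 2 by norm_num, Real.log_pow]; norm_num
  have hl2 := Real.log_two_gt_d9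
  have hdiff : M / 16 ≤ Chebyshev.theta M - Chebyshev.theta (M / 16) := by
    rw [hl4] at hup
    nlinarith
  have hlogM : Real.log M = (j + 1) * Real.log 16 := by
    rw [hM, Real.log_pow]; push_cast; ring
  have hsum : Chebyshev.theta M - Chebyshev.theta (M / 16)
      = ∑ q ∈ (Finset.Ioc (16 ^ j) (16 ^ (j + 1))).filter Nat.Prime, Real.log q := by
    rw [← hM16, hM]
    unfold Chebyshev.theta
    have e1 : ⌊(16 : ℝ) ^ (j + 1)⌋₊ = 16 ^ (j + 1) := by exact_mod_cast Nat.floor_natCast (R := ℝ) (16 ^ (j + 1))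
    have e2 : ⌊(16 : ℝ) ^ j⌋₊ = 16 ^ j := by exact_mod_cast Nat.floor_natCast (R := ℝ) (16 ^ j)
    rw [e1, e2]
    have hle : 16 ^ j ≤ 16 ^ (j + 1) := Nat.pow_le_pow_right (by norm_num) (by omega)
    rw [← Finset.Ioc_union_Ioc_eq_Ioc (Nat.zero_le (16 ^ j)) hle, Finset.filter_union,
      Finset.sum_union]
    · ring
    · apply Finset.disjoint_filter_filter
      rw [Finset.disjoint_left]
      intro x hx hx'
      simp at hx hx'; omega
  rw [hsum] at hdiff
  have h5 : ∑ q ∈ (Finset.Ioc (16 ^ j) (16 ^ (j + 1))).filter Nat.Prime, Real.log q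
      ≤ ∑ q ∈ (Finset.Ioc (16 ^ j) (16 ^ (j + 1))).filter Nat.Prime,
        (M * (3 * (j + 1))) * ((1 : ℝ) / q) := by
    apply Finset.sum_le_sum
    intro q hq
    simp only [Finset.mem_filter, Finset.mem_Ioc] at hq
    have hq0 : (0 : ℝ) < q := by exact_mod_cast hq.2.pos
    have hqM : (q : ℝ) ≤ M := by rw [hM]; exact_mod_cast hq.1.2
    have hlq : Real.log q ≤ 3 * (j + 1) := by
      refine (Real.log_le_log hq0 hqM).trans ?_
      rw [hlogM]
      have := log16_lt
      have : (0 : ℝ) ≤ j := by positivity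
      nlinarith
    rw [mul_one_div, le_div_iff₀ hq0, mul_comm M]
    exact mul_le_mul hlq hqM hq0.le (by positivity)
  rw [← Finset.mul_sum] at h5
  set X := ∑ q ∈ (Finset.Ioc (16 ^ j) (16 ^ (j + 1))).filter Nat.Prime, (1 : ℝ) / q
  have h6 : M * (1 / 16) ≤ M * (3 * (j + 1) * X) := by nlinarith
  have h7 := le_of_mul_le_mul_left h6 hM0
  rw [div_le_iff₀ (by positivity)]
  linarith

lemma sum_prime_Ioc (a t d : ℕ) (f : ℕ → ℝ) (g : ℕ → ℕ) (hg : Monotone g) (h : t = a + d) :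
    ∑ q ∈ (Finset.Ioc (g a) (g t)).filter Nat.Prime, f q =
      ∑ j ∈ Finset.Ico a t, ∑ q ∈ (Finset.Ioc (g j) (g (j + 1))).filter Nat.Prime, f q := by
  subst h
  induction d with
  | zero => simp
  | succ d ih =>
    rw [← add_assoc, Finset.sum_Ico_succ_top (by omega), ← ih,
      ← Finset.Ioc_union_Ioc_eq_Ioc (hg (show a ≤ a + d by omega)) (hg (show a + d ≤ a + d + 1 by omega)),
      Finset.filter_union, Finset.sum_union]
    apply Finset.disjoint_filter_filter
    rw [Finset.disjoint_left]
    intro x hx hx'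
    simp at hx hx'; omega

lemma prime_sum_lower : ∃ s₀ : ℕ, ∀ s t, s₀ ≤ s → s ≤ t →
    ((t : ℝ) - s) / 96 ≤
      ∑ q ∈ (Finset.Ioc (16 ^ (2 ^ s)) (16 ^ (2 ^ t))).filter Nat.Prime, (1 : ℝ) / q := by
  obtain ⟨J, hJ⟩ := prime_block
  refine ⟨J, fun s t hs hst => ?_⟩
  have hm1 : Monotone fun i : ℕ => 16 ^ i := fun a b h => Nat.pow_le_pow_right (by norm_num) h
  have hm2 : Monotone fun i : ℕ => 16 ^ (2 ^ i) :=
    fun a b h => hm1 (Nat.pow_le_pow_right (by norm_num) h)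
  rw [sum_prime_Ioc s t (t - s) _ (fun i => 16 ^ (2 ^ i)) hm2 (by omega)]
  have : ∀ i ∈ Finset.Ico s t, (1 : ℝ) / 96 ≤
      ∑ q ∈ (Finset.Ioc (16 ^ (2 ^ i)) (16 ^ (2 ^ (i + 1)))).filter Nat.Prime, (1 : ℝ) / q := by
    intro i hi
    simp only [Finset.mem_Ico] at hi
    rw [sum_prime_Ioc (2 ^ i) (2 ^ (i + 1)) (2 ^ i) _ (fun i => 16 ^ i) hm1 (by ring)]
    have h3 : ∀ j ∈ Finset.Ico (2 ^ i) (2 ^ (i + 1)), (1 : ℝ) / (48 * 2 ^ (i + 1)) ≤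
      ∑ q ∈ (Finset.Ioc (16 ^ j) (16 ^ (j + 1))).filter Nat.Prime, (1 : ℝ) / q := by
      intro j hj
      simp only [Finset.mem_Ico] at hj
      have h4 : i < 2 ^ i := Nat.lt_two_pow_self
      refine le_trans ?_ (hJ j (by omega))
      apply one_div_le_one_div_of_le (by positivity)
      have : (j : ℝ) + 1 ≤ 2 ^ (i + 1) := by exact_mod_cast hj.2
      linarith
    refine le_trans ?_ (Finset.card_nsmul_le_sum _ _ _ h3)
    rw [Nat.card_Ico, nsmul_eq_mul]
    have : 2 ^ (i + 1) - 2 ^ i = 2 ^ i := by rw [pow_succ]; omega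
    rw [this, pow_succ]
    push_cast
    apply le_of_eq
    field_simp
    norm_num
  refine le_trans ?_ (Finset.card_nsmul_le_sum _ _ _ this)
  rw [Nat.card_Ico, nsmul_eq_mul, Nat.cast_sub hst]
  apply le_of_eq; ring
lemma le_sigma1 (n : ℕ) : n ≤ sigma1 n := by
  unfold sigma1
  rw [ArithmeticFunction.sigma_one_apply]
  rcases Nat.eq_zero_or_pos n with rfl | h
  · simp
  · exact Finset.single_le_sum (f := fun d => d) (fun _ _ => Nat.zero_le _)
      (Nat.mem_divisors_self n h.ne')

lemma s_add (n : ℕ) : s n + n = sigma1 n := by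
  unfold s
  have := le_sigma1 n
  omega

lemma s_int (n : ℕ) : (s n : ℤ) = sigma1 n - n := by
  have := s_add n
  omega

lemma s_eq_sum (n : ℕ) : s n = ∑ d ∈ n.properDivisors, d := by
  have h1 := s_add n
  have h2 : sigma1 n = ∑ d ∈ n.divisors, d := ArithmeticFunction.sigma_one_apply n
  rw [Nat.sum_divisors_eq_sum_properDivisors_add_self] at h2
  omega

lemma sigma1_mul {a b : ℕ} (h : Nat.Coprime a b) : sigma1 (a * b) = sigma1 a * sigma1 b :=
  ArithmeticFunction.isMultiplicative_sigma.map_mul_of_coprime h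

lemma sigma1_prime {q : ℕ} (hq : q.Prime) : sigma1 q = q + 1 := by
  unfold sigma1
  rw [ArithmeticFunction.sigma_one_apply, hq.sum_divisors, add_comm]

lemma sigma1_pos {n : ℕ} (h : 1 ≤ n) : 0 < sigma1 n := lt_of_lt_of_le h (le_sigma1 n)

lemma sigma1_squarefree {a : ℕ} (ha : Squarefree a) :
    sigma1 a = ∏ q ∈ a.primeFactors, (q + 1) := by
  have h1 := ArithmeticFunction.IsMultiplicative.map_prod_of_subset_primeFactors
    (f := ArithmeticFunction.sigma 1) ArithmeticFunction.isMultiplicative_sigma a a.primeFactors subset_rfl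
  rw [Nat.prod_primeFactors_of_squarefree ha] at h1
  unfold sigma1
  rw [h1]
  apply Finset.prod_congr rfl
  intro q hq
  exact sigma1_prime (Nat.prime_of_mem_primeFactors hq)

lemma exists_dvd_succ {a p : ℕ} (ha : Squarefree a) (hp : p.Prime) (h : p ∣ sigma1 a) :
    ∃ q, q.Prime ∧ q ∣ a ∧ p ∣ q + 1 := by
  rw [sigma1_squarefree ha, hp.prime.dvd_finsetProd_iff] at h
  obtain ⟨q, hq, h⟩ := h
  exact ⟨q, Nat.prime_of_mem_primeFactors hq, Nat.dvd_of_mem_primeFactors hq, h⟩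

lemma not_dvd_sigma1 {a p : ℕ} (ha : Squarefree a) (hp : p.Prime) (h5 : 5 ≤ p)
    (hle : ∀ q, q.Prime → q ∣ a → q ≤ p) : ¬ p ∣ sigma1 a := by
  intro h
  obtain ⟨q, hq, hqa, hd⟩ := exists_dvd_succ ha hp h
  have h1 := hle q hq hqa
  obtain ⟨c, hc⟩ := hd
  have hc1 : c = 1 := by
    rcases c with _ | _ | c
    · omega
    · rfl
    · nlinarith
  subst hc1
  have hpo := hp.eq_two_or_odd
  have hqo := hq.eq_two_or_odd
  omega

lemma dvd_six {a : ℕ} (ha : Squarefree a) (hle : ∀ q, q.Prime → q ∣ a → q ≤ 4) : a ∣ 6 := by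
  rw [← Nat.prod_primeFactors_of_squarefree ha]
  have : a.primeFactors ⊆ {2, 3} := by
    intro q hq
    have h1 := Nat.prime_of_mem_primeFactors hq
    have h2 := hle q h1 (Nat.dvd_of_mem_primeFactors hq)
    have h3 := h1.two_le
    interval_cases q
    · simp
    · simp
    · norm_num at h1
  exact (Finset.prod_dvd_prod_of_subset _ _ (fun q => q) this).trans (by simp)

lemma sigma_ratio_aux (M : ℕ) (hM : 4 ≤ M) : ∀ a b : ℕ, Squarefree a → Squarefree b →
    (∀ q, q.Prime → q ∣ a → q ≤ M) → (∀ q, q.Prime → q ∣ b → q ≤ M) →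
    sigma1 a * b = sigma1 b * a → a = b := by
  induction M, hM using Nat.le_induction with
  | base =>
    intro a b ha hb h1 h2 h
    have ha6 := dvd_six ha h1
    have hb6 := dvd_six hb h2
    have hs1 : sigma1 1 = 1 := by decide +kernel
    have hs2 : sigma1 2 = 3 := by decide +kernel
    have hs3 : sigma1 3 = 4 := by decide +kernel
    have hs6 : sigma1 6 = 12 := by decide +kernel
    have hd : Nat.divisors 6 = {1, 2, 3, 6} := by decide +kernel
    have ha' : a ∈ Nat.divisors 6 := by simp [ha6]
    have hb' : b ∈ Nat.divisors 6 := by simp [hb6]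
    rw [hd] at ha' hb'
    simp only [Finset.mem_insert, Finset.mem_singleton] at ha' hb'
    rcases ha' with rfl | rfl | rfl | rfl <;> rcases hb' with rfl | rfl | rfl | rfl <;>
      simp_all
  | succ M hM ih =>
    intro a b ha hb h1 h2 h
    set P := M + 1 with hP
    by_cases hp : P.Prime
    · have hiff : P ∣ a ↔ P ∣ b := by
        constructor
        · intro hd
          have : P ∣ sigma1 a * b := by rw [h]; exact hd.mul_left _
          exact (hp.dvd_mul.1 this).resolve_left (not_dvd_sigma1 ha hp (by omega) h1)
        · intro hd
          have : P ∣ sigma1 b * a := by rw [← h]; exact hd.mul_left _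
          exact (hp.dvd_mul.1 this).resolve_left (not_dvd_sigma1 hb hp (by omega) h2)
      by_cases hd : P ∣ a
      · obtain ⟨a', rfl⟩ := hd
        obtain ⟨b', rfl⟩ := hiff.1 (dvd_mul_right _ _)
        have hca : Nat.Coprime P a' := Nat.coprime_of_squarefree_mul ha
        have hcb : Nat.Coprime P b' := Nat.coprime_of_squarefree_mul hb
        rw [sigma1_mul hca, sigma1_mul hcb] at h
        have hpos : 0 < sigma1 P * P := Nat.mul_pos (sigma1_pos hp.pos) hp.pos
        have h' : sigma1 a' * b' = sigma1 b' * a' := by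
          apply Nat.eq_of_mul_eq_mul_left hpos
          linarith
        have key : ∀ c, Nat.Coprime P c → (∀ q, q.Prime → q ∣ P * c → q ≤ P) →
            ∀ q, q.Prime → q ∣ c → q ≤ M := by
          intro c hc hh q hq hqc
          have h3 := hh q hq (hqc.mul_left _)
          have h4 : q ≠ P := by
            intro hqP
            rw [hqP] at hqc
            have := Nat.dvd_gcd (dvd_refl P) hqc
            rw [hc] at this
            exact hp.one_lt.ne' (Nat.dvd_one.1 this)
          omega
        rw [ih a' b' (ha.squarefree_of_dvd (dvd_mul_left _ _))
          (hb.squarefree_of_dvd (dvd_mul_left _ _)) (key a' hca h1) (key b' hcb h2) h']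
      · have hdb := fun h => hd (hiff.2 h)
        apply ih a b ha hb _ _ h
        · intro q hq hqa
          have := h1 q hq hqa
          have : q ≠ P := by rintro rfl; exact hd hqa
          omega
        · intro q hq hqa
          have := h2 q hq hqa
          have : q ≠ P := by rintro rfl; exact hdb hqa
          omega
    · apply ih a b ha hb _ _ h
      · intro q hq hqa
        have := h1 q hq hqa
        have : q ≠ P := by rintro rfl; exact hp hq
        omega
      · intro q hq hqa
        have := h2 q hq hqa
        have : q ≠ P := by rintro rfl; exact hp hq
        omega

lemma sigma_ratio_inj {a b : ℕ} (ha : Squarefree a) (hb : Squarefree b)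
    (h : sigma1 a * b = sigma1 b * a) : a = b := by
  have ha0 := Nat.pos_of_ne_zero ha.ne_zero
  have hb0 := Nat.pos_of_ne_zero hb.ne_zero
  refine sigma_ratio_aux (a + b + 4) (by omega) a b ha hb ?_ ?_ h
  · intro q _ hq
    have := Nat.le_of_dvd ha0 hq; omega
  · intro q _ hq
    have := Nat.le_of_dvd hb0 hq; omega

/-- two primes with the same cofactor are congruent mod `p^3`. -/
lemma cong_q {p m q q' : ℕ} (hp : p.Prime) (hm : ¬ p ^ 2 ∣ m) (hq : q.Prime) (hq' : q'.Prime)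
    (hqm : ¬ q ∣ m) (hqm' : ¬ q' ∣ m) (h : p ^ 4 ∣ s (m * q)) (h' : p ^ 4 ∣ s (m * q')) :
    q ≡ q' [MOD p ^ 3] := by
  have key : ∀ r : ℕ, r.Prime → ¬ r ∣ m → (s (m * r) : ℤ) = s m * r + sigma1 m := by
    intro r hr hrm
    have hc : Nat.Coprime m r := ((Nat.Prime.coprime_iff_not_dvd hr).2 hrm).symm
    rw [s_int, sigma1_mul hc, sigma1_prime hr, s_int]
    push_cast; ring
  have e1 : ((p : ℤ) ^ 4) ∣ s m * q + sigma1 m := by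
    rw [← key q hq hqm]; exact_mod_cast h
  have e2 : ((p : ℤ) ^ 4) ∣ s m * q' + sigma1 m := by
    rw [← key q' hq' hqm']; exact_mod_cast h'
  have hpi : Prime (p : ℤ) := Nat.prime_iff_prime_int.1 hp
  have hsm : ¬ (p : ℤ) ^ 2 ∣ s m := by
    intro hd
    have h1 : ((p : ℤ) ^ 2) ∣ s m * q + sigma1 m := (pow_dvd_pow _ (by norm_num)).trans e1
    have h2 : ((p : ℤ) ^ 2) ∣ sigma1 m := (dvd_add_right (hd.mul_right _)).1 h1
    have h3 : ((p : ℤ) ^ 2) ∣ m := by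
      have := dvd_sub h2 hd
      rw [s_int] at this
      simpa using this
    exact hm (by exact_mod_cast h3)
  have e3 : (p : ℤ) ^ 4 ∣ s m * ((q' : ℤ) - q) := by
    have := dvd_sub e2 e1
    have heq : (s m : ℤ) * ((q' : ℤ) - q) = s m * q' + sigma1 m - (s m * q + sigma1 m) := by ring
    rw [heq]; exact this
  have e4 : (p : ℤ) ^ 3 ∣ (q' : ℤ) - q := by
    by_cases hd : (p : ℤ) ∣ s m
    · obtain ⟨c, hc⟩ := hd
      have hcp : ¬ (p : ℤ) ∣ c := by
        rintro ⟨d, rfl⟩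
        exact hsm ⟨d, by rw [hc]; ring⟩
      rw [hc, mul_assoc, pow_succ' (p : ℤ) 3] at e3
      have e5 := (mul_dvd_mul_iff_left hpi.ne_zero).1 e3
      exact hpi.pow_dvd_of_dvd_mul_left 3 hcp e5
    · exact (pow_dvd_pow _ (by norm_num)).trans (hpi.pow_dvd_of_dvd_mul_left 4 hd e3)
  rw [Nat.modEq_iff_dvd]
  exact_mod_cast e4

/-- structure: large squarefree unitary divisor. -/
lemma exists_unitary {n T : ℕ} (hn : 1 ≤ n) (h : ∀ b, T < b → ¬ b ^ 2 ∣ n) :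
    ∃ u v, n = u * v ∧ Squarefree u ∧ Nat.Coprime u v ∧ v ≤ T ^ 3 := by
  obtain ⟨a, b, hab, ha⟩ := Nat.sq_mul_squarefree n
  have hb : b ≤ T := by
    by_contra hb
    exact h b (by omega) ⟨a, hab.symm⟩
  have hb0 : 0 < b := by
    rcases Nat.eq_zero_or_pos b with rfl | h
    · simp at hab; omega
    · exact h
  obtain ⟨u, hu⟩ := Nat.gcd_dvd_left a b
  set g := Nat.gcd a b with hg
  have hgb : g ≤ b := Nat.gcd_le_right _ hb0
  have hsq : Squarefree u := ha.squarefree_of_dvd ⟨g, by rw [hu]; ring⟩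
  have hcg : Nat.Coprime g u := by rw [hu] at ha; exact Nat.coprime_of_squarefree_mul ha
  have hcb : Nat.Coprime u b := by
    apply Nat.coprime_of_dvd
    intro k hk hku hkb
    have : k ∣ g := Nat.dvd_gcd (hku.trans ⟨g, by rw [hu]; ring⟩) hkb
    have := Nat.dvd_gcd this hku
    rw [hcg] at this
    exact hk.one_lt.ne' (Nat.dvd_one.1 this)
  refine ⟨u, b ^ 2 * g, ?_, hsq, ?_, ?_⟩
  · rw [← hab]
    conv_lhs => rw [hu]
    ring
  · exact Nat.Coprime.mul_right (hcb.pow_right 2) hcg.symm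
  · calc b ^ 2 * g ≤ T ^ 2 * T := Nat.mul_le_mul (Nat.pow_le_pow_left hb 2) (hgb.trans hb)
      _ = T ^ 3 := by ring

lemma s_le_of_proper {a A : ℕ} (h : ∀ d, d ∣ a → d < a → d ≤ A) :
    s a ≤ a.divisors.card * A := by
  rw [s_eq_sum]
  refine (Finset.sum_le_card_nsmul _ _ A ?_).trans ?_
  · intro d hd
    rw [Nat.mem_properDivisors] at hd
    exact h d hd.1 hd.2
  · rw [smul_eq_mul]
    exact Nat.mul_le_mul_right _ (Finset.card_le_card Nat.properDivisors_subset_divisors)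

lemma s_le_self_mul (n : ℕ) : s n ≤ n.divisors.card * n :=
  s_le_of_proper fun _ _ h => h.le

lemma sigma1_le_sq (n : ℕ) : sigma1 n ≤ n ^ 2 := by
  have : sigma1 n = ∑ d ∈ n.divisors, d := ArithmeticFunction.sigma_one_apply n
  rw [this]
  refine (Finset.sum_le_card_nsmul _ _ n fun d hd => Nat.divisor_le hd).trans ?_
  rw [smul_eq_mul, sq]
  exact Nat.mul_le_mul_right _ (Nat.card_divisors_le_self n)

/-- uniqueness of `a` given `b, p`. -/
lemma cong_a {p a a' b A K : ℕ} (hp : p.Prime) (hA : K * A ^ 3 < p ^ 4)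
    (hsa : Squarefree a) (hsa' : Squarefree a') (hc : Nat.Coprime b a) (hc' : Nat.Coprime b a')
    (hpa : ¬ p ∣ b * a) (hK : (b * a).divisors.card ≤ K)
    (hK' : (b * a').divisors.card ≤ K)
    (ha : a ≤ A ^ 2) (ha' : a' ≤ A ^ 2)
    (hd : ∀ d, d ∣ a → d < a → d ≤ A) (hd' : ∀ d, d ∣ a' → d < a' → d ≤ A)
    (hb : b ≠ 0)
    (h : p ^ 4 ∣ s (b * a)) (h' : p ^ 4 ∣ s (b * a')) : a = a' := by
  apply sigma_ratio_inj hsa hsa'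
  have hpi : Prime (p : ℤ) := Nat.prime_iff_prime_int.1 hp
  have e1 : (p : ℤ) ^ 4 ∣ sigma1 b * sigma1 a - b * a := by
    have : (p : ℤ) ^ 4 ∣ (s (b * a) : ℤ) := by exact_mod_cast h
    rw [s_int, sigma1_mul hc] at this
    exact_mod_cast this
  have e2 : (p : ℤ) ^ 4 ∣ sigma1 b * sigma1 a' - b * a' := by
    have : (p : ℤ) ^ 4 ∣ (s (b * a') : ℤ) := by exact_mod_cast h'
    rw [s_int, sigma1_mul hc'] at this
    exact_mod_cast this
  have hpb : ¬ (p : ℤ) ∣ sigma1 b := by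
    intro hdv
    have h1 : (p : ℤ) ∣ sigma1 b * sigma1 a - b * a := (dvd_pow_self _ (by norm_num)).trans e1
    have h2 : (p : ℤ) ∣ b * a := by
      have := dvd_sub (hdv.mul_right (sigma1 a : ℤ)) h1
      simpa using this
    exact hpa (by exact_mod_cast h2)
  have e3 : (p : ℤ) ^ 4 ∣ sigma1 b * (sigma1 a * a' - sigma1 a' * a) := by
    have := dvd_sub (e1.mul_right (a' : ℤ)) (e2.mul_right (a : ℤ))
    have heq : (sigma1 b : ℤ) * (sigma1 a * a' - sigma1 a' * a) =
      (sigma1 b * sigma1 a - b * a) * a' - (sigma1 b * sigma1 a' - b * a') * a := by ring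
    rw [heq]; exact this
  have e4 := hpi.pow_dvd_of_dvd_mul_left 4 hpb e3
  have e5 : (p : ℤ) ^ 4 ∣ (s a * a' : ℤ) - s a' * a := by
    have heq : (s a * a' : ℤ) - s a' * a = sigma1 a * a' - sigma1 a' * a := by
      rw [s_int, s_int]; ring
    rw [heq]; exact e4
  have b1 : s a * a' < p ^ 4 := by
    have h1 : a.divisors.card ≤ K := by
      refine le_trans (Finset.card_le_card (Nat.divisors_subset_of_dvd ?_ (dvd_mul_left a b))) hK
      exact mul_ne_zero hb hsa.ne_zero
    calc s a * a' ≤ (K * A) * A ^ 2 :=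
          Nat.mul_le_mul ((s_le_of_proper hd).trans (Nat.mul_le_mul_right _ h1)) ha'
      _ = K * A ^ 3 := by ring
      _ < _ := hA
  have b2 : s a' * a < p ^ 4 := by
    have h1 : a'.divisors.card ≤ K := by
      refine le_trans (Finset.card_le_card (Nat.divisors_subset_of_dvd ?_ (dvd_mul_left a' b))) hK'
      exact mul_ne_zero hb hsa'.ne_zero
    calc s a' * a ≤ (K * A) * A ^ 2 :=
          Nat.mul_le_mul ((s_le_of_proper hd').trans (Nat.mul_le_mul_right _ h1)) ha
      _ = K * A ^ 3 := by ring
      _ < _ := hA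
  have e6 : (s a * a' : ℤ) - s a' * a = 0 := by
    apply Int.eq_zero_of_abs_lt_dvd e5
    have c1 : (s a * a' : ℤ) < p ^ 4 := by exact_mod_cast b1
    have c2 : (s a' * a : ℤ) < p ^ 4 := by exact_mod_cast b2
    have c3 : (0 : ℤ) ≤ s a * a' := by positivity
    have c4 : (0 : ℤ) ≤ s a' * a := by positivity
    rw [abs_lt]; constructor <;> linarith
  rw [s_int, s_int] at e6
  have : (sigma1 a * a' : ℤ) = sigma1 a' * a := by linarith
  exact_mod_cast this

/-- minimal divisor exceeding `A`. -/
lemma exists_min_div {u A : ℕ} (hu : A < u) (hA : 1 ≤ A) :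
    ∃ a, a ∣ u ∧ A < a ∧ (∀ d, d ∣ a → d < a → d ≤ A) ∧ (a.Prime ∨ a ≤ A ^ 2) := by
  have hex : ∃ a, a ∣ u ∧ A < a := ⟨u, dvd_rfl, hu⟩
  have hm := Nat.find_spec hex
  set a := Nat.find hex with ha
  have hd : ∀ d, d ∣ a → d < a → d ≤ A := by
    intro d hda hlt
    by_contra hcon
    exact Nat.find_min hex hlt ⟨hda.trans hm.1, by omega⟩
  refine ⟨a, hm.1, hm.2, hd, ?_⟩
  by_cases hp : a.Prime
  · exact Or.inl hp
  · right
    obtain ⟨c, hca, hc1, hc2⟩ := Nat.exists_dvd_of_not_prime2 (by omega) hp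
    obtain ⟨e, he⟩ := hca
    have hc : c ≤ A := hd c ⟨e, he⟩ hc2
    have he' : e < a := by
      have : e ≠ 0 := by rintro rfl; omega
      nlinarith [Nat.pos_of_ne_zero this]
    have hee : e ≤ A := hd e ⟨c, by rw [he]; ring⟩ he'
    rw [he, sq]
    exact Nat.mul_le_mul hc hee

/-- harmonic sum -/
noncomputable def HS (N : ℕ) : ℝ := ∑ j ∈ Finset.Icc 1 N, (1 : ℝ) / j

lemma HS_le_log (N : ℕ) : HS N ≤ 1 + Real.log N := by
  have h := harmonic_le_one_add_log N
  refine le_trans (le_of_eq ?_) h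
  rw [harmonic_eq_sum_Icc, HS]
  push_cast
  exact Finset.sum_congr rfl fun _ _ => one_div _

lemma HS_nonneg (N : ℕ) : 0 ≤ HS N := Finset.sum_nonneg fun _ _ => by positivity

lemma HS_pow (l : ℕ) {N : ℕ} (h : N ≤ 16 ^ l) : HS N ≤ 1 + 3 * l := by
  refine (HS_le_log N).trans ?_
  rcases Nat.eq_zero_or_pos N with rfl | hN
  · simp
    try positivity
  have h1 : Real.log N ≤ Real.log ((16 : ℝ) ^ l) :=
    Real.log_le_log (by exact_mod_cast hN) (by exact_mod_cast h)
  rw [Real.log_pow] at h1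
  have := log16_lt
  have h3 : (l : ℝ) * Real.log 16 ≤ l * 3 := by gcongr
  linarith

lemma card_mod (F : Finset ℕ) (X d : ℕ) (hX : ∀ q ∈ F, q ≤ X) 
    (h : ∀ q ∈ F, ∀ q' ∈ F, q ≡ q' [MOD d]) : F.card ≤ X / d + 1 := by
  rw [← Finset.card_range (X / d + 1)]
  apply Finset.card_le_card_of_injOn (fun q => q / d)
  · intro q hq
    simp only [Finset.coe_range, Set.mem_Iio]
    exact Nat.lt_succ_of_le (Nat.div_le_div_right (hX q hq))
  · intro q hq q' hq' he
    have h1 := h q hq q' hq'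
    simp only at he
    rw [← Nat.div_add_mod q d, ← Nat.div_add_mod q' d, he]
    rw [h1]

lemma fiber (N : ℕ) (P : ℕ → Prop) (J : Finset ℕ) (F : ℕ → Finset ℕ) 
    (h : ∀ n, 1 ≤ n → n ≤ N → P n → ∃ m ∈ J, ∃ q ∈ F m, n = m * q) :
    cnt N P ≤ ∑ m ∈ J, ((F m).card : ℝ) := by
  unfold cnt
  norm_cast
  refine le_trans (Finset.card_le_card ?_) ((Finset.card_biUnion_le (s := J)
    (t := fun m => (F m).image (fun q => m * q))).trans 
      (Finset.sum_le_sum fun m _ => Finset.card_image_le))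
  intro n hn
  simp only [Finset.mem_filter, Finset.mem_biUnion, Finset.mem_image, Finset.mem_Icc] at hn ⊢
  obtain ⟨m, hm, q, hq, he⟩ := h n hn.1.1 hn.1.2 hn.2
  exact ⟨m, hm, q, hq, he.symm⟩

lemma sum_min (N Z : ℕ) : ∑ m ∈ Finset.Icc 1 N, ((min Z (N / m) : ℕ) : ℝ) ≤ N * HS Z := by
  have h1 : ∀ m ∈ Finset.Icc 1 N, ((min Z (N / m) : ℕ) : ℝ) = 
      ∑ t ∈ Finset.Icc 1 Z, if t * m ≤ N then (1 : ℝ) else 0 := by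
    intro m hm
    rw [Finset.mem_Icc] at hm
    rw [Finset.sum_boole]
    congr 1
    have : (Finset.Icc 1 Z).filter (fun t => t * m ≤ N) = Finset.Icc 1 (min Z (N / m)) := by
      ext t
      simp only [Finset.mem_filter, Finset.mem_Icc, le_min_iff, Nat.le_div_iff_mul_le hm.1]
      tauto
    rw [this]; simp
  rw [Finset.sum_congr rfl h1, Finset.sum_comm, HS, Finset.mul_sum]
  apply Finset.sum_le_sum
  intro t ht
  rw [Finset.mem_Icc] at ht
  rw [Finset.sum_boole]
  have : (Finset.Icc 1 N).filter (fun m => t * m ≤ N) ⊆ Finset.Icc 1 (N / t) := by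
    intro m
    simp only [Finset.mem_filter, Finset.mem_Icc, Nat.le_div_iff_mul_le ht.1]
    rintro ⟨h, h'⟩
    exact ⟨h.1, by rw [mul_comm]; exact h'⟩
  calc _ ≤ (((Finset.Icc 1 (N / t)).card : ℕ) : ℝ) := by exact_mod_cast Finset.card_le_card this
    _ = ((N / t : ℕ) : ℝ) := by simp
    _ ≤ N / t := Nat.cast_div_le
    _ = _ := by ring

/-- the set of admissible primes for a cofactor `m` -/
noncomputable def QF (p B X m : ℕ) : Finset ℕ :=
  (Finset.Icc 1 X).filter (fun q => q.Prime ∧ B < q ∧ ¬ q ∣ m ∧ ¬ p ^ 2 ∣ m ∧ p ^ 4 ∣ s (m * q))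

lemma QF_card {p : ℕ} (hp : p.Prime) (B X m : ℕ) : (QF p B X m).card ≤ X / p ^ 3 + 1 := by
  apply card_mod
  · intro q hq
    simp only [QF, Finset.mem_filter, Finset.mem_Icc] at hq
    exact hq.1.2
  · intro q hq q' hq'
    simp only [QF, Finset.mem_filter, Finset.mem_Icc] at hq hq'
    exact cong_q hp hq.2.2.2.2.1 hq.2.1 hq'.2.1 hq.2.2.2.1 hq'.2.2.2.1 hq.2.2.2.2.2 hq'.2.2.2.2.2

lemma QF_card' {p : ℕ} (hp : p.Prime) (B X m : ℕ) (hB : p ^ 3 ≤ B) :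
    ((QF p B X m).card : ℝ) ≤ X * (2 / (p : ℝ) ^ 3) := by
  have hp3 : (0 : ℝ) < (p : ℝ) ^ 3 := by have := hp.pos; positivity
  rcases (QF p B X m).eq_empty_or_nonempty with he | ⟨q, hq⟩
  · rw [he]; simp; positivity
  · simp only [QF, Finset.mem_filter, Finset.mem_Icc] at hq
    have h1 : p ^ 3 ≤ X := by omega
    have h2 : ((QF p B X m).card : ℝ) ≤ ((X / p ^ 3 : ℕ) : ℝ) + 1 := by
      exact_mod_cast QF_card hp B X m
    have h3 : ((X / p ^ 3 : ℕ) : ℝ) ≤ X / (p : ℝ) ^ 3 := by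
      refine Nat.cast_div_le.trans ?_
      push_cast; rfl
    have h4 : (1 : ℝ) ≤ X / (p : ℝ) ^ 3 := by
      rw [le_div_iff₀ hp3, one_mul]; exact_mod_cast h1
    calc _ ≤ X / (p : ℝ) ^ 3 + X / (p : ℝ) ^ 3 := by linarith
      _ = _ := by ring

lemma split_q {p n q : ℕ} (h4 : p ^ 4 ∣ s n) (h2 : ¬ p ^ 2 ∣ n) (hq : q ∣ n)
    (hqq : ¬ q ^ 2 ∣ n) : ∃ m, n = m * q ∧ ¬ q ∣ m ∧ ¬ p ^ 2 ∣ m ∧ p ^ 4 ∣ s (m * q) := by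
  obtain ⟨m, rfl⟩ := hq
  refine ⟨m, mul_comm _ _, ?_, ?_, by rwa [mul_comm m q]⟩
  · rintro ⟨c, rfl⟩
    exact hqq ⟨c, by ring⟩
  · intro h; exact h2 (h.mul_left _)

lemma cnt_L8 {p : ℕ} (hp : p.Prime) (N Z : ℕ) :
    cnt N (fun n => p ^ 4 ∣ s n ∧ ¬ p ^ 2 ∣ n ∧ 
      ∃ q, q.Prime ∧ p ^ 3 < q ∧ q ≤ Z ∧ q ∣ n ∧ ¬ q ^ 2 ∣ n) ≤ 
      N * HS Z * (2 / (p : ℝ) ^ 3) := by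
  refine (fiber N _ (Finset.Icc 1 N) (fun m => QF p (p ^ 3) (min Z (N / m)) m) ?_).trans ?_
  · rintro n hn1 hnN ⟨h4, h2, q, hq, hpq, hqZ, hqn, hqq⟩
    obtain ⟨m, hm, hm1, hm2, hm3⟩ := split_q h4 h2 hqn hqq
    have hm0 : 1 ≤ m := by
      rcases Nat.eq_zero_or_pos m with rfl | h
      · simp at hm; omega
      · exact h
    have hmN : m ≤ N := le_trans (by rw [hm]; exact Nat.le_mul_of_pos_right _ hq.pos) hnN
    refine ⟨m, Finset.mem_Icc.2 ⟨hm0, hmN⟩, q, ?_, hm⟩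
    simp only [QF, Finset.mem_filter, Finset.mem_Icc, le_min_iff]
    refine ⟨⟨hq.one_lt.le, hqZ, ?_⟩, hq, hpq, hm1, hm2, hm3⟩
    rw [Nat.le_div_iff_mul_le hm0, mul_comm, ← hm]; exact hnN
  · refine (Finset.sum_le_sum fun m _ => QF_card' hp (p ^ 3) (min Z (N / m)) m le_rfl).trans ?_
    rw [← Finset.sum_mul]
    gcongr
    exact sum_min N Z

lemma cnt_L9 {p A : ℕ} (hp : p.Prime) (hA : 1 ≤ A) (N : ℕ) :
    cnt N (fun n => p ^ 4 ∣ s n ∧ ¬ p ^ 2 ∣ n ∧ 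
      ∃ q, q.Prime ∧ A < q ∧ q ∣ n ∧ ¬ q ^ 2 ∣ n) ≤ 
      N / A + N * HS N / (p : ℝ) ^ 3 := by
  refine (fiber N _ (Finset.Icc 1 (N / A)) (fun m => QF p A (N / m) m) ?_).trans ?_
  · rintro n hn1 hnN ⟨h4, h2, q, hq, hpq, hqn, hqq⟩
    obtain ⟨m, hm, hm1, hm2, hm3⟩ := split_q h4 h2 hqn hqq
    have hm0 : 1 ≤ m := by
      rcases Nat.eq_zero_or_pos m with rfl | h
      · simp at hm; omega
      · exact h
    have hmN : m ≤ N / A := by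
      rw [Nat.le_div_iff_mul_le hA]
      refine le_trans ?_ hnN
      rw [hm]; exact Nat.mul_le_mul_left _ hpq.le
    refine ⟨m, Finset.mem_Icc.2 ⟨hm0, hmN⟩, q, ?_, hm⟩
    simp only [QF, Finset.mem_filter, Finset.mem_Icc]
    refine ⟨⟨hq.one_lt.le, ?_⟩, hq, hpq, hm1, hm2, hm3⟩
    rw [Nat.le_div_iff_mul_le hm0, mul_comm, ← hm]; exact hnN
  · have hp3 : (0 : ℝ) < (p : ℝ) ^ 3 := by have := hp.pos; positivity
    have h1 : ∀ m ∈ Finset.Icc 1 (N / A), ((QF p A (N / m) m).card : ℝ) ≤ 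
        1 + N / (p : ℝ) ^ 3 * (1 / m) := by
      intro m hm
      rw [Finset.mem_Icc] at hm
      have h2 : ((QF p A (N / m) m).card : ℝ) ≤ ((N / m / p ^ 3 : ℕ) : ℝ) + 1 := by
        exact_mod_cast QF_card hp A (N / m) m
      have h3 : ((N / m / p ^ 3 : ℕ) : ℝ) ≤ N / (p : ℝ) ^ 3 * (1 / m) := by
        rw [Nat.div_div_eq_div_mul]
        refine Nat.cast_div_le.trans (le_of_eq ?_)
        push_cast
        rw [div_mul_div_comm, mul_one, mul_comm (m : ℝ)]
      linarith
    refine (Finset.sum_le_sum h1).trans ?_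
    rw [Finset.sum_add_distrib, ← Finset.mul_sum]
    have h2 : ∑ m ∈ Finset.Icc 1 (N / A), (1 : ℝ) / m ≤ HS N := by
      apply Finset.sum_le_sum_of_subset_of_nonneg
      · exact Finset.Icc_subset_Icc_right (Nat.div_le_self _ _)
      · intros; positivity
    have h3 : ∑ m ∈ Finset.Icc 1 (N / A), (1 : ℝ) ≤ N / A := by
      simp only [Finset.sum_const, Nat.card_Icc, nsmul_eq_mul, mul_one]
      simpa using Nat.cast_div_le (α := ℝ) (m := N) (n := A)
    have h4 : N / (p : ℝ) ^ 3 * ∑ m ∈ Finset.Icc 1 (N / A), (1 : ℝ) / m ≤ N / (p : ℝ) ^ 3 * HS N := by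
      gcongr
    calc _ ≤ (N : ℝ) / A + N / (p : ℝ) ^ 3 * HS N := add_le_add h3 h4
      _ = _ := by ring

lemma cnt_L10 {p A K : ℕ} (hp : p.Prime) (hA : 1 ≤ A) (hK : K * A ^ 3 < p ^ 4) (N : ℕ) :
    cnt N (fun n => p ^ 4 ∣ s n ∧ ¬ p ∣ n ∧ n.divisors.card ≤ K ∧
      ∃ b a, n = b * a ∧ Squarefree a ∧ Nat.Coprime b a ∧ A < a ∧ a ≤ A ^ 2 ∧ 
        (∀ d, d ∣ a → d < a → d ≤ A)) ≤ N / A := by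
  refine (fiber N _ (Finset.Icc 1 (N / A)) (fun b => (Finset.Icc 1 N).filter (fun a => 
    p ^ 4 ∣ s (b * a) ∧ ¬ p ∣ b * a ∧ (b * a).divisors.card ≤ K ∧ Squarefree a ∧ 
    Nat.Coprime b a ∧ a ≤ A ^ 2 ∧ (∀ d, d ∣ a → d < a → d ≤ A))) ?_).trans ?_
  · rintro n hn1 hnN ⟨h4, h2, h3, b, a, rfl, ha, hc, hAa, haA, hd⟩
    have hb0 : 1 ≤ b := by
      rcases Nat.eq_zero_or_pos b with rfl | h
      · simp at hn1
      · exact h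
    have hbN : b ≤ N / A := by
      rw [Nat.le_div_iff_mul_le hA]
      exact le_trans (Nat.mul_le_mul_left _ hAa.le) hnN
    refine ⟨b, Finset.mem_Icc.2 ⟨hb0, hbN⟩, a, ?_, rfl⟩
    simp only [Finset.mem_filter, Finset.mem_Icc]
    exact ⟨⟨by omega, le_trans (Nat.le_mul_of_pos_left _ hb0) hnN⟩, h4, h2, h3, ha, hc, haA, hd⟩
  · have h1 : ∀ b ∈ Finset.Icc 1 (N / A), ((((Finset.Icc 1 N).filter (fun a => 
      p ^ 4 ∣ s (b * a) ∧ ¬ p ∣ b * a ∧ (b * a).divisors.card ≤ K ∧ Squarefree a ∧ 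
      Nat.Coprime b a ∧ a ≤ A ^ 2 ∧ (∀ d, d ∣ a → d < a → d ≤ A))).card : ℕ) : ℝ) ≤ 1 := by
      intro b hb
      rw [Finset.mem_Icc] at hb
      norm_cast
      rw [Finset.card_le_one]
      intro a ha a' ha'
      simp only [Finset.mem_filter, Finset.mem_Icc] at ha ha'
      obtain ⟨_, a1, a2, a3, a4, a5, a6, a7⟩ := ha
      obtain ⟨_, b1, b2, b3, b4, b5, b6, b7⟩ := ha'
      exact cong_a hp hK a4 b4 a5 b5 a2 a3 b3 a6 b6 a7 b7 (by omega) a1 b1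
    refine (Finset.sum_le_sum h1).trans ?_
    simp only [Finset.sum_const, Nat.card_Icc, nsmul_eq_mul, mul_one]
    simpa using Nat.cast_div_le (α := ℝ) (m := N) (n := A)

lemma cnt_L12 {p : ℕ} (hp : p.Prime) (N : ℕ) :
    cnt N (fun n => ∃ q, q.Prime ∧ p ∣ q + 1 ∧ p * q ∣ n) ≤ 2 * N * HS N / (p : ℝ) ^ 2 := by
  have h0 : cnt N (fun n => ∃ q, q.Prime ∧ p ∣ q + 1 ∧ p * q ∣ n) ≤ 
      cnt N (fun n => ∃ j ∈ Finset.Icc 1 N, p * (p * j - 1) ∣ n) := by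
    apply cnt_mono
    rintro n h1 hN ⟨q, hq, ⟨j, hj⟩, hd⟩
    have hqN : q ≤ N := (Nat.le_of_dvd h1 ((dvd_mul_left q p).trans hd)).trans hN
    have hj0 : 1 ≤ j := by
      rcases Nat.eq_zero_or_pos j with rfl | h
      · simp at hj
      · exact h
    have h2 := hp.two_le
    refine ⟨j, Finset.mem_Icc.2 ⟨hj0, by nlinarith⟩, ?_⟩
    rw [← hj]; simpa using hd
  refine h0.trans ((cnt_exists N _ _).trans ?_)
  have hp0 : (2 : ℝ) ≤ p := by exact_mod_cast hp.two_le
  have h1 : ∀ j ∈ Finset.Icc 1 N, cnt N (fun n => p * (p * j - 1) ∣ n) ≤ 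
      2 * N / (p : ℝ) ^ 2 * (1 / j) := by
    intro j hj
    rw [Finset.mem_Icc] at hj
    refine (cnt_dvd _ _).trans ?_
    have hj1 : (1 : ℝ) ≤ j := by exact_mod_cast hj.1
    have h1 : 1 ≤ p * j := Nat.mul_pos hp.pos hj.1
    have h2 : (1 : ℝ) ≤ p * j / 2 := by nlinarith
    rw [Nat.cast_mul, Nat.cast_sub h1]
    push_cast
    have h3 : (p : ℝ) * (p * j / 2) ≤ p * (p * j - 1) := by gcongr; linarith
    calc (N : ℝ) / (p * (p * j - 1)) ≤ N / (p * (p * j / 2)) := by gcongr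
      _ = _ := by field_simp
  refine (Finset.sum_le_sum h1).trans (le_of_eq ?_)
  rw [← Finset.mul_sum, HS]
  ring

lemma cnt_tau (N : ℕ) (K : ℝ) : cnt N (fun n => K ≤ n.divisors.card) * K ≤ N * HS N := by
  refine (cnt_mul_le N _ K (fun n => (n.divisors.card : ℝ)) (fun n => by positivity) 
    (fun n _ _ h => h)).trans ?_
  have h1 : ∀ n ∈ Finset.Icc 1 N, (n.divisors.card : ℝ) = 
      ∑ t ∈ Finset.Icc 1 N, if t ∣ n then (1 : ℝ) else 0 := by
    intro n hn
    rw [Finset.mem_Icc] at hn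
    rw [Finset.sum_boole]
    congr 2
    ext t
    simp only [Nat.mem_divisors, Finset.mem_filter, Finset.mem_Icc]
    constructor
    · rintro ⟨h, h'⟩
      exact ⟨⟨Nat.pos_of_dvd_of_pos h hn.1, (Nat.le_of_dvd hn.1 h).trans hn.2⟩, h⟩
    · rintro ⟨h, h'⟩; exact ⟨h', by omega⟩
  rw [Finset.sum_congr rfl h1, Finset.sum_comm, HS, Finset.mul_sum]
  apply Finset.sum_le_sum
  intro t ht
  rw [Finset.sum_boole]
  have := cnt_dvd N t
  unfold cnt at this
  calc _ ≤ (N : ℝ) / t := by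
        refine le_trans (le_of_eq ?_) this
        congr!
    _ = _ := by ring

lemma s_pos {n : ℕ} (hn : 2 ≤ n) : 0 < s n := by
  rw [s_eq_sum]
  have h1 : 1 ∈ n.properDivisors := by
    rw [Nat.mem_properDivisors]; exact ⟨one_dvd _, by omega⟩
  exact Finset.sum_pos' (fun _ _ => Nat.zero_le _) ⟨1, h1, by norm_num⟩

/-- pointwise analysis for large `p` -/
lemma rangeC_point {T N l n p : ℕ} (hlN : l < N) (hl : 2 ≤ l)
    (hT : T ^ 6 < l ^ 10) (hbig : l ^ 14 * T ^ 12 < N ^ 3) (hn1 : 1 ≤ n) (hnN : n ≤ N)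
    (hln : N ≤ n * l) (htau : n.divisors.card < l ^ 2)
    (hb : ∀ b, T < b → ¬ b ^ 2 ∣ n) (hp : p.Prime) (hpl : l ^ 10 ≤ p) (h4 : p ^ 4 ∣ s n)
    (h2 : ¬ p ^ 2 ∣ n) :
    p ≤ N ∧ ((∃ q, q.Prime ∧ p ∣ q + 1 ∧ p * q ∣ n) ∨
      (p ^ 4 ∣ s n ∧ ¬ p ^ 2 ∣ n ∧ ∃ q, q.Prime ∧ p * l ^ 2 < q ∧ q ∣ n ∧ ¬ q ^ 2 ∣ n) ∨
      (p ^ 4 ∣ s n ∧ ¬ p ∣ n ∧ n.divisors.card ≤ l ^ 2 ∧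
      ∃ b a, n = b * a ∧ Squarefree a ∧ Nat.Coprime b a ∧ p * l ^ 2 < a ∧ a ≤ (p * l ^ 2) ^ 2 ∧ 
        (∀ d, d ∣ a → d < a → d ≤ p * l ^ 2))) := by
  have hn2 : 2 ≤ n := by
    by_contra hcon
    have : n = 1 := by omega
    subst this
    omega
  have hle : p ^ 4 ≤ l ^ 2 * N := 
    (Nat.le_of_dvd (s_pos hn2) h4).trans ((s_le_self_mul n).trans (Nat.mul_le_mul htau.le hnN))
  have hpN : p ≤ N := by
    by_contra hcon
    have h1 : N ^ 4 < p ^ 4 := Nat.pow_lt_pow_left (by omega) (by norm_num)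
    have h3 : l ^ 2 * N ≤ N ^ 2 * N := Nat.mul_le_mul_right _ (Nat.pow_le_pow_left hlN.le 2)
    have h5 : N ^ 2 * N * 1 ≤ N ^ 2 * N * N := Nat.mul_le_mul_left _ (by omega)
    have h6 : N ^ 2 * N * N = N ^ 4 := by ring
    omega
  refine ⟨hpN, ?_⟩
  obtain ⟨u, v, huv, hu, hc, hv⟩ := exists_unitary hn1 hb
  have hv0 : 0 < v := by
    rcases Nat.eq_zero_or_pos v with rfl | h
    · simp at huv; omega
    · exact h
  have hunit : ∀ a, a ∣ u → Nat.Coprime a v := fun a ha => Nat.Coprime.coprime_dvd_left ha hc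
  have hun : u ∣ n := ⟨v, huv⟩
  by_cases hpn : p ∣ n
  · left
    have h5 : p ∣ sigma1 n := by
      rw [← s_add]
      exact dvd_add ((dvd_pow_self p (by norm_num)).trans h4) hpn
    rw [huv, sigma1_mul hc] at h5
    have h6 : ¬ p ∣ sigma1 v := by
      intro hd
      have h7 := Nat.le_of_dvd (sigma1_pos hv0) hd
      have h8 := sigma1_le_sq v
      have h9 : v ^ 2 ≤ (T ^ 3) ^ 2 := Nat.pow_le_pow_left hv 2
      rw [← pow_mul] at h9
      norm_num at h9
      omega
    obtain ⟨q, hq, hqu, hpq⟩ := exists_dvd_succ hu hp ((hp.dvd_mul.1 h5).resolve_right h6)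
    refine ⟨q, hq, hpq, ?_⟩
    have hne : p ≠ q := by
      rintro rfl
      have := (Nat.dvd_add_right (dvd_refl p)).1 hpq
      exact hp.one_lt.ne' (Nat.dvd_one.1 this)
    exact Nat.Coprime.mul_dvd_of_dvd_of_dvd ((Nat.coprime_primes hp hq).2 hne) hpn (hqu.trans hun)
  · right
    have hA1 : 1 ≤ p * l ^ 2 := Nat.mul_pos hp.pos (by positivity)
    have hAu : p * l ^ 2 < u := by
      by_contra hcon
      push Not at hcon
      have h5 : N ≤ p * l ^ 2 * T ^ 3 * l := by
        calc N ≤ n * l := hln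
          _ = u * v * l := by rw [huv]
          _ ≤ _ := Nat.mul_le_mul_right _ (Nat.mul_le_mul hcon hv)
      have h6 : N ^ 4 ≤ l ^ 14 * T ^ 12 * N := by
        calc N ^ 4 ≤ (p * l ^ 2 * T ^ 3 * l) ^ 4 := Nat.pow_le_pow_left h5 4
          _ = p ^ 4 * (l ^ 12 * T ^ 12) := by ring
          _ ≤ l ^ 2 * N * (l ^ 12 * T ^ 12) := Nat.mul_le_mul_right _ hle
          _ = _ := by ring
      have h7 : l ^ 14 * T ^ 12 * N < N ^ 3 * N := Nat.mul_lt_mul_of_pos_right hbig (by omega)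
      have h8 : N ^ 3 * N = N ^ 4 := by ring
      omega
    obtain ⟨a, hau, hAa, hd, hor⟩ := exists_min_div hAu hA1
    rcases hor with hap | haA
    · left
      refine ⟨h4, h2, a, hap, hAa, hau.trans hun, ?_⟩
      intro h
      rw [huv] at h
      have h5 : a ^ 2 ∣ u := ((hunit a hau).pow_left 2).dvd_of_dvd_mul_right h
      rw [sq] at h5
      exact hap.one_lt.ne' (Nat.isUnit_iff.1 (hu a h5))
    · right
      refine ⟨h4, hpn, htau.le, ?_⟩
      have hav := hunit a hau
      obtain ⟨c, rfl⟩ := hau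
      refine ⟨c * v, a, by rw [huv]; ring, hu.squarefree_of_dvd (dvd_mul_right _ _), ?_, hAa, haA, hd⟩
      exact Nat.Coprime.mul_left (Nat.coprime_of_squarefree_mul hu).symm hav.symm

lemma cnt_small (N l : ℕ) (hl : 1 ≤ l) : cnt N (fun n => n * l < N) ≤ N / l := by
  unfold cnt
  have : (Finset.Icc 1 N).filter (fun n => n * l < N) ⊆ Finset.Icc 1 (N / l) := by
    intro n
    simp only [Finset.mem_filter, Finset.mem_Icc, Nat.le_div_iff_mul_le hl]
    rintro ⟨h, h'⟩
    exact ⟨h.1, h'.le⟩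
  calc _ ≤ (((Finset.Icc 1 (N / l)).card : ℕ) : ℝ) := by
        refine Nat.cast_le.2 (le_trans (le_of_eq ?_) (Finset.card_le_card this))
        congr!
    _ = ((N / l : ℕ) : ℝ) := by simp
    _ ≤ N / l := Nat.cast_div_le

lemma rangeC {T N l : ℕ} (hN1 : 16 ^ l ≤ N) (hN2 : N ≤ 16 ^ (l + 1)) (hl : 2 ≤ l)
    (hT : T ^ 6 < l ^ 10) (hbig : l ^ 14 * T ^ 12 < N ^ 3) :
    cnt N (fun n => (∀ b, T < b → ¬ b ^ 2 ∣ n) ∧ 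
      ∃ p, p.Prime ∧ l ^ 10 ≤ p ∧ p ^ 4 ∣ s n ∧ ¬ p ^ 2 ∣ n) ≤ 31 * (N / l) := by
  have hlN : l < N := lt_of_lt_of_le (Nat.lt_pow_self (by norm_num)) hN1
  have hlR : (2 : ℝ) ≤ l := by exact_mod_cast hl
  have hH : HS N ≤ 5 * l := by
    have := HS_pow (l + 1) hN2
    push_cast at this
    linarith
  have hH0 := HS_nonneg N
  set J := (Finset.Icc (l ^ 10) N).filter Nat.Prime with hJ
  set P : ℕ → ℕ → Prop := fun p n => ((∃ q, q.Prime ∧ p ∣ q + 1 ∧ p * q ∣ n) ∨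
      (p ^ 4 ∣ s n ∧ ¬ p ^ 2 ∣ n ∧ ∃ q, q.Prime ∧ p * l ^ 2 < q ∧ q ∣ n ∧ ¬ q ^ 2 ∣ n) ∨
      (p ^ 4 ∣ s n ∧ ¬ p ∣ n ∧ n.divisors.card ≤ l ^ 2 ∧
      ∃ b a, n = b * a ∧ Squarefree a ∧ Nat.Coprime b a ∧ p * l ^ 2 < a ∧ a ≤ (p * l ^ 2) ^ 2 ∧ 
        (∀ d, d ∣ a → d < a → d ≤ p * l ^ 2))) with hP
  have hstep : cnt N (fun n => (∀ b, T < b → ¬ b ^ 2 ∣ n) ∧ 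
      ∃ p, p.Prime ∧ l ^ 10 ≤ p ∧ p ^ 4 ∣ s n ∧ ¬ p ^ 2 ∣ n) ≤ 
      cnt N (fun n => (n * l < N) ∨ (((l : ℝ) ^ 2 ≤ n.divisors.card) ∨ ∃ p ∈ J, P p n)) := by
    apply cnt_mono
    rintro n hn1 hnN ⟨hb, p, hp, hpl, h4, h2⟩
    by_cases c1 : n * l < N
    · exact Or.inl c1
    by_cases c2 : (l : ℝ) ^ 2 ≤ n.divisors.card
    · exact Or.inr (Or.inl c2)
    right; right
    have c2' : n.divisors.card < l ^ 2 := by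
      rw [not_le] at c2; exact_mod_cast c2
    obtain ⟨h5, h6⟩ := rangeC_point hlN hl hT hbig hn1 hnN (by omega) c2' hb hp hpl h4 h2
    exact ⟨p, Finset.mem_filter.2 ⟨Finset.mem_Icc.2 ⟨hpl, h5⟩, hp⟩, h6⟩
  refine hstep.trans ((cnt_or _ _ _).trans ?_)
  have b1 := cnt_small N l (by omega)
  have b2 : cnt N (fun n => (l : ℝ) ^ 2 ≤ n.divisors.card) ≤ 5 * (N / l) := by
    have h := cnt_tau N ((l : ℝ) ^ 2)
    have h' : cnt N (fun n => (l : ℝ) ^ 2 ≤ n.divisors.card) * (l : ℝ) ^ 2 ≤ 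
        (5 * (N / l)) * (l : ℝ) ^ 2 := by
      refine h.trans ?_
      calc (N : ℝ) * HS N ≤ N * (5 * l) := by gcongr
        _ = _ := by field_simp
    exact le_of_mul_le_mul_right h' (by positivity)
  have b3 : cnt N (fun n => ∃ p ∈ J, P p n) ≤ 25 * (N / l) := by
    refine (cnt_exists N J P).trans ?_
    have hp1 : ∀ p ∈ J, cnt N (P p) ≤ 15 * N * l * (1 / (p : ℝ) ^ 2) + 2 * N / (l : ℝ) ^ 2 * (1 / p) := by
      intro p hpJ
      rw [hJ, Finset.mem_filter, Finset.mem_Icc] at hpJ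
      obtain ⟨⟨hpl, hpN⟩, hp⟩ := hpJ
      have hA1 : 1 ≤ p * l ^ 2 := Nat.mul_pos hp.pos (by positivity)
      have hK : l ^ 2 * (p * l ^ 2) ^ 3 < p ^ 4 := by
        have h1 : l ^ 8 < p := lt_of_lt_of_le (Nat.pow_lt_pow_right (by omega) (by norm_num)) hpl
        calc l ^ 2 * (p * l ^ 2) ^ 3 = l ^ 8 * p ^ 3 := by ring
          _ < p * p ^ 3 := Nat.mul_lt_mul_of_pos_right h1 (pow_pos hp.pos 3)
          _ = _ := by ring
      refine (cnt_or _ _ _).trans ?_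
      have c1 := cnt_L12 hp N
      have c23 := cnt_or N (fun n => p ^ 4 ∣ s n ∧ ¬ p ^ 2 ∣ n ∧ ∃ q, q.Prime ∧ p * l ^ 2 < q ∧ q ∣ n ∧ ¬ q ^ 2 ∣ n)
        (fun n => p ^ 4 ∣ s n ∧ ¬ p ∣ n ∧ n.divisors.card ≤ l ^ 2 ∧
          ∃ b a, n = b * a ∧ Squarefree a ∧ Nat.Coprime b a ∧ p * l ^ 2 < a ∧ a ≤ (p * l ^ 2) ^ 2 ∧ 
          (∀ d, d ∣ a → d < a → d ≤ p * l ^ 2))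
      have c2 := cnt_L9 hp hA1 N
      have c3 := cnt_L10 hp hA1 hK N
      have hpR : (1 : ℝ) ≤ p := by exact_mod_cast hp.one_lt.le
      have d1 : 2 * N * HS N / (p : ℝ) ^ 2 ≤ 10 * N * l * (1 / (p : ℝ) ^ 2) := by
        calc 2 * N * HS N / (p : ℝ) ^ 2 ≤ 2 * N * (5 * l) / (p : ℝ) ^ 2 := by gcongr
          _ = _ := by ring
      have d2 : N * HS N / (p : ℝ) ^ 3 ≤ 5 * N * l * (1 / (p : ℝ) ^ 2) := by
        calc N * HS N / (p : ℝ) ^ 3 ≤ N * (5 * l) / (p : ℝ) ^ 2 := by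
              gcongr
              norm_num
          _ = _ := by ring
      have d3 : (N : ℝ) / ((p * l ^ 2 : ℕ) : ℝ) = N / (l : ℝ) ^ 2 * (1 / p) := by
        push_cast; rw [div_mul_div_comm, mul_one, mul_comm (p : ℝ)]
      rw [d3] at c2 c3
      have e : 2 * N / (l : ℝ) ^ 2 * (1 / p) = N / (l : ℝ) ^ 2 * (1 / p) + N / (l : ℝ) ^ 2 * (1 / p) := by
        ring
      rw [e]
      linarith
    refine (Finset.sum_le_sum hp1).trans ?_
    rw [Finset.sum_add_distrib, ← Finset.mul_sum, ← Finset.mul_sum]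
    have hlpow : l ^ 2 + 1 ≤ l ^ 10 := Nat.pow_lt_pow_right (by omega) (by norm_num)
    have s1 : ∑ p ∈ J, 1 / (p : ℝ) ^ 2 ≤ 1 / (l : ℝ) ^ 2 := by
      have h := sum_inv_sq_le (l ^ 2) N (by nlinarith)
      push_cast at h
      refine le_trans ?_ h
      apply Finset.sum_le_sum_of_subset_of_nonneg
      · intro p hp
        rw [hJ, Finset.mem_filter, Finset.mem_Icc] at hp
        rw [Finset.mem_Ioc]
        exact ⟨by omega, hp.1.2⟩
      · intros; positivity
    have s2 : ∑ p ∈ J, 1 / (p : ℝ) ≤ 5 * l := by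
      refine le_trans ?_ hH
      apply Finset.sum_le_sum_of_subset_of_nonneg
      · intro p hp
        rw [hJ, Finset.mem_filter, Finset.mem_Icc] at hp
        rw [Finset.mem_Icc]
        exact ⟨by omega, hp.1.2⟩
      · intros; positivity
    calc _ ≤ 15 * N * l * (1 / (l : ℝ) ^ 2) + 2 * N / (l : ℝ) ^ 2 * (5 * l) := by gcongr
      _ = _ := by field_simp; norm_num
  have b23 := cnt_or N (fun n => (l : ℝ) ^ 2 ≤ n.divisors.card) (fun n => ∃ p ∈ J, P p n)
  linarith

set_option maxHeartbeats 1000000 in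
lemma rangeA_block : ∃ i₁ : ℕ, ∀ i T N : ℕ, i₁ ≤ i → T ≤ (2 ^ 2 ^ i) ^ 10 → 16 ^ (2 ^ 2 ^ i) ≤ N →
    cnt N (fun n => (∀ b, T < b → ¬ b ^ 2 ∣ n) ∧ 
      ∃ p, p.Prime ∧ (2 ^ 2 ^ i) ^ 10 ≤ p ∧ p < (2 ^ 2 ^ i) ^ 20 ∧ p ^ 4 ∣ s n ∧ ¬ p ^ 2 ∣ n) ≤ 
      584 * (N * (1 / 2) ^ i) := by
  obtain ⟨s₀, hs₀⟩ := prime_sum_lower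
  refine ⟨s₀ + 4, fun i T N hi hT hN => ?_⟩
  have hi4 : 2 * (i + 4) ≤ 2 ^ i := by
    have : ∀ j, 2 * (j + 4 + 4) ≤ 2 ^ (j + 4) := by
      intro j
      induction j with
      | zero => norm_num
      | succ j ih =>
        have : 2 ^ (j + 1 + 4) = 2 * 2 ^ (j + 4) := by ring
        omega
    have h := this (i - 4)
    rwa [Nat.sub_add_cancel (by omega)] at h
  have h1 := hs₀ (i + 4) (2 ^ i) (by omega) (by omega)
  set r := 2 ^ 2 ^ i with hr
  have h64 : 16 ^ 2 ^ (i + 4) = r ^ 64 := by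
    rw [hr, show (16 : ℕ) = 2 ^ 4 by norm_num, ← pow_mul, ← pow_mul]
    congr 1
    ring
  have hr2i : 2 ^ i ≤ r := Nat.pow_le_pow_right (by norm_num) Nat.lt_two_pow_self.le
  have hr2 : 2 ≤ r := by
    have : 1 ≤ 2 ^ i := Nat.one_le_two_pow
    calc 2 = 2 ^ 1 := by norm_num
      _ ≤ r := Nat.pow_le_pow_right (by norm_num) this
  clear_value r
  set I := (Finset.Ioc (16 ^ 2 ^ (i + 4)) (16 ^ r)).filter Nat.Prime with hI
  have hItu := turan N I (fun q hq => (Finset.mem_filter.1 hq).2)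
  have hIc : (I.card : ℝ) ≤ N := by
    have h2 : I.card ≤ 16 ^ r := by
      refine (Finset.card_filter_le _ _).trans ?_
      rw [Nat.card_Ioc]; exact Nat.sub_le _ _
    exact_mod_cast h2.trans hN
  have hpow : (0 : ℝ) < (2 : ℝ) ^ i := by positivity
  have hE : (2 : ℝ) ^ i / 192 ≤ ∑ q ∈ I, (1 : ℝ) / q := by
    refine le_trans ?_ h1
    have : (2 : ℝ) * (i + 4) ≤ 2 ^ i := by exact_mod_cast hi4
    push_cast
    linarith
  have b1 : cnt N (fun n => ∀ q ∈ I, ¬ q ∣ n) ≤ 576 * (N * (1 / 2) ^ i) := by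
    have h2 : cnt N (fun n => ∀ q ∈ I, ¬ q ∣ n) * (2 ^ i / 192) ≤ 
        576 * (N * (1 / 2) ^ i) * (2 ^ i / 192) := by
      calc _ ≤ cnt N (fun n => ∀ q ∈ I, ¬ q ∣ n) * ∑ q ∈ I, (1 : ℝ) / q := 
            mul_le_mul_of_nonneg_left hE (cnt_nonneg _ _)
        _ ≤ N + 2 * I.card := hItu
        _ ≤ 3 * N := by linarith
        _ = _ := by
          rw [one_div, inv_pow]
          field_simp
          ring
    exact le_of_mul_le_mul_right h2 (by positivity)
  set J := (Finset.Ico (r ^ 10) (r ^ 20)).filter Nat.Prime with hJ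
  set P : ℕ → ℕ → Prop := fun p n => p ^ 4 ∣ s n ∧ ¬ p ^ 2 ∣ n ∧ 
      ∃ q, q.Prime ∧ p ^ 3 < q ∧ q ≤ 16 ^ r ∧ q ∣ n ∧ ¬ q ^ 2 ∣ n with hP
  have hstep : cnt N (fun n => (∀ b, T < b → ¬ b ^ 2 ∣ n) ∧ 
      ∃ p, p.Prime ∧ r ^ 10 ≤ p ∧ p < r ^ 20 ∧ p ^ 4 ∣ s n ∧ ¬ p ^ 2 ∣ n) ≤ 
      cnt N (fun n => (∀ q ∈ I, ¬ q ∣ n) ∨ ∃ p ∈ J, P p n) := by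
    apply cnt_mono
    rintro n hn1 hnN ⟨hb, p, hp, hp1, hp2, h4, h2⟩
    by_cases c : ∀ q ∈ I, ¬ q ∣ n
    · exact Or.inl c
    right
    push Not at c
    obtain ⟨q, hqI, hqn⟩ := c
    rw [hI, Finset.mem_filter, Finset.mem_Ioc, h64] at hqI
    obtain ⟨⟨hq1, hq2⟩, hq⟩ := hqI
    refine ⟨p, Finset.mem_filter.2 ⟨Finset.mem_Ico.2 ⟨hp1, hp2⟩, hp⟩, h4, h2, q, hq, ?_, hq2, hqn, ?_⟩
    · calc p ^ 3 ≤ (r ^ 20) ^ 3 := Nat.pow_le_pow_left hp2.le 3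
        _ = r ^ 60 := by ring
        _ ≤ r ^ 64 := Nat.pow_le_pow_right (by omega) (by norm_num)
        _ < q := hq1
    · apply hb
      calc T ≤ r ^ 10 := hT
        _ ≤ r ^ 64 := Nat.pow_le_pow_right (by omega) (by norm_num)
        _ < q := hq1
  have b2 : cnt N (fun n => ∃ p ∈ J, P p n) ≤ 8 * (N * (1 / 2) ^ i) := by
    refine (cnt_exists N J P).trans ?_
    have hrR : (2 : ℝ) ≤ r := by exact_mod_cast hr2
    have hH : HS (16 ^ r) ≤ 4 * r := by
      have := HS_pow r (le_refl (16 ^ r))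
      linarith
    have hp1 : ∀ p ∈ J, cnt N (P p) ≤ 8 * N * r * (1 / (p : ℝ) ^ 2) := by
      intro p hpJ
      have hp := (Finset.mem_filter.1 hpJ).2
      refine (cnt_L8 hp N (16 ^ r)).trans ?_
      have hpR : (1 : ℝ) ≤ p := by exact_mod_cast hp.one_lt.le
      calc N * HS (16 ^ r) * (2 / (p : ℝ) ^ 3) ≤ N * (4 * r) * (2 / (p : ℝ) ^ 2) := by
            gcongr
            norm_num
        _ = _ := by ring
    refine (Finset.sum_le_sum hp1).trans ?_
    rw [← Finset.mul_sum]
    have hlpow : r ^ 2 + 1 ≤ r ^ 10 := Nat.pow_lt_pow_right (by omega) (by norm_num)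
    have s1 : ∑ p ∈ J, 1 / (p : ℝ) ^ 2 ≤ 1 / (r : ℝ) ^ 2 := by
      have h := sum_inv_sq_le (r ^ 2) (r ^ 20) (by nlinarith)
      push_cast at h
      refine le_trans ?_ h
      apply Finset.sum_le_sum_of_subset_of_nonneg
      · intro p hp
        rw [hJ, Finset.mem_filter, Finset.mem_Ico] at hp
        rw [Finset.mem_Ioc]
        exact ⟨by omega, hp.1.2.le⟩
      · intros; positivity
    have hri : (2 : ℝ) ^ i ≤ r := by exact_mod_cast hr2i
    calc 8 * N * r * ∑ p ∈ J, 1 / (p : ℝ) ^ 2 ≤ 8 * N * r * (1 / (r : ℝ) ^ 2) := by gcongr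
      _ = 8 * (N * (1 / r)) := by
          have : (r : ℝ) ≠ 0 := by positivity
          rw [sq]; field_simp
      _ ≤ 8 * (N * (1 / 2 ^ i)) := by gcongr
      _ = _ := by rw [one_div_pow]
  have b3 := cnt_or N (fun n => ∀ q ∈ I, ¬ q ∣ n) (fun n => ∃ p ∈ J, P p n)
  linarith

lemma exists_block (i₀ p : ℕ) (h : (2 ^ 2 ^ i₀) ^ 10 < p) : 
    ∃ i, i₀ ≤ i ∧ (2 ^ 2 ^ i) ^ 10 ≤ p ∧ p < (2 ^ 2 ^ i) ^ 20 := by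
  have hex : ∃ i, i₀ ≤ i ∧ p < (2 ^ 2 ^ i) ^ 20 := by
    refine ⟨i₀ + p, by omega, ?_⟩
    have h1 : p < 2 ^ p := Nat.lt_two_pow_self
    have h2 : 2 ^ p ≤ 2 ^ (i₀ + p) := Nat.pow_le_pow_right (by norm_num) (by omega)
    have h3 : 2 ^ (i₀ + p) < 2 ^ 2 ^ (i₀ + p) := Nat.lt_two_pow_self
    have h4 : 2 ^ 2 ^ (i₀ + p) ≤ (2 ^ 2 ^ (i₀ + p)) ^ 20 := Nat.le_self_pow (by norm_num) _
    omega
  have hm := Nat.find_spec hex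
  set i := Nat.find hex with hi
  refine ⟨i, hm.1, ?_, hm.2⟩
  rcases Nat.eq_or_lt_of_le hm.1 with he | hlt
  · rw [← he]; exact h.le
  · have := Nat.find_min hex (m := i - 1) (by omega)
    push Not at this
    have h1 := this (by omega)
    have h2 : (2 ^ 2 ^ (i - 1)) ^ 20 = (2 ^ 2 ^ i) ^ 10 := by
      obtain ⟨j, hj⟩ : ∃ j, i = j + 1 := ⟨i - 1, by omega⟩
      rw [hj, Nat.add_sub_cancel, pow_succ 2 j, pow_mul, ← pow_mul, ← pow_mul, ← pow_mul]
    rwa [h2] at h1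

lemma rangeA : ∃ i₁ : ℕ, ∀ i₀ N l : ℕ, i₁ ≤ i₀ → 16 ^ l ≤ N →
    cnt N (fun n => (∀ b, (2 ^ 2 ^ i₀) ^ 10 < b → ¬ b ^ 2 ∣ n) ∧ 
      ∃ p, p.Prime ∧ (2 ^ 2 ^ i₀) ^ 10 < p ∧ p < l ^ 10 ∧ p ^ 4 ∣ s n ∧ ¬ p ^ 2 ∣ n) ≤ 
      1168 * (N * (1 / 2) ^ i₀) := by
  obtain ⟨i₁, hi₁⟩ := rangeA_block
  refine ⟨i₁, fun i₀ N l hi hN => ?_⟩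
  set J := (Finset.Ico i₀ (i₀ + l)).filter (fun i => 2 ^ 2 ^ i ≤ l) with hJ
  set T := (2 ^ 2 ^ i₀) ^ 10 with hT
  set P : ℕ → ℕ → Prop := fun i n => (∀ b, T < b → ¬ b ^ 2 ∣ n) ∧ 
      ∃ p, p.Prime ∧ (2 ^ 2 ^ i) ^ 10 ≤ p ∧ p < (2 ^ 2 ^ i) ^ 20 ∧ p ^ 4 ∣ s n ∧ ¬ p ^ 2 ∣ n with hP
  have hstep : cnt N (fun n => (∀ b, T < b → ¬ b ^ 2 ∣ n) ∧ 
      ∃ p, p.Prime ∧ T < p ∧ p < l ^ 10 ∧ p ^ 4 ∣ s n ∧ ¬ p ^ 2 ∣ n) ≤ 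
      cnt N (fun n => ∃ i ∈ J, P i n) := by
    apply cnt_mono
    rintro n hn1 hnN ⟨hb, p, hp, hp1, hp2, h4, h2⟩
    obtain ⟨i, hii, hpi, hpi'⟩ := exists_block i₀ p hp1
    have hrl : 2 ^ 2 ^ i ≤ l := by
      have : (2 ^ 2 ^ i) ^ 10 < l ^ 10 := by omega
      exact (lt_of_pow_lt_pow_left₀ 10 (by omega) this).le
    have hil : i < l := lt_of_lt_of_le (Nat.lt_two_pow_self.trans Nat.lt_two_pow_self) hrl
    refine ⟨i, Finset.mem_filter.2 ⟨Finset.mem_Ico.2 ⟨hii, by omega⟩, hrl⟩, hb, p, hp, hpi, hpi', h4, h2⟩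
  refine hstep.trans ((cnt_exists N J P).trans ?_)
  have hb : ∀ i ∈ J, cnt N (P i) ≤ 584 * N * (1 / 2 : ℝ) ^ i := by
    intro i hiJ
    rw [hJ, Finset.mem_filter, Finset.mem_Ico] at hiJ
    refine (hi₁ i T N (by omega) ?_ ?_).trans (le_of_eq (by ring))
    · exact Nat.pow_le_pow_left (Nat.pow_le_pow_right (by norm_num) 
        (Nat.pow_le_pow_right (by norm_num) hiJ.1.1)) 10
    · exact (Nat.pow_le_pow_right (by norm_num) hiJ.2).trans hN
  refine (Finset.sum_le_sum hb).trans ?_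
  rw [← Finset.mul_sum]
  have hg : ∑ i ∈ J, (1 / 2 : ℝ) ^ i ≤ 2 * (1 / 2) ^ i₀ := by
    calc ∑ i ∈ J, (1 / 2 : ℝ) ^ i ≤ ∑ i ∈ Finset.Ico i₀ (i₀ + l), (1 / 2 : ℝ) ^ i :=
          Finset.sum_le_sum_of_subset_of_nonneg (Finset.filter_subset _ _) 
            (by intros; positivity)
      _ = (1 / 2 : ℝ) ^ i₀ * ∑ i ∈ Finset.range l, (1 / 2 : ℝ) ^ i := by
          rw [Finset.sum_Ico_eq_sum_range, Finset.mul_sum, Nat.add_sub_cancel_left]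
          exact Finset.sum_congr rfl fun _ _ => pow_add _ _ _
      _ ≤ (1 / 2 : ℝ) ^ i₀ * 2 := by
          gcongr
          exact sum_geometric_two_le l
      _ = _ := by ring
  calc 584 * N * ∑ i ∈ J, (1 / 2 : ℝ) ^ i ≤ 584 * N * (2 * (1 / 2) ^ i₀) := by gcongr
    _ = _ := by ring

/-- small primes are harmless -/
lemma small_primes {k T n q : ℕ} (hk : 4 ≤ k) (hb : ∀ b, T < b → ¬ b ^ 2 ∣ n)
    (hq : q.Prime) (hTq : T < q) (hD : T.factorial ^ k ∣ q + 1) (hqn : q ∣ n)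
    (hbad : ¬ (KFree k n ↔ KFree k (s n))) :
    ∃ p, p.Prime ∧ T < p ∧ p ^ 4 ∣ s n ∧ ¬ p ^ 2 ∣ n := by
  by_contra hcon
  push Not at hcon
  apply hbad
  have hsig : T.factorial ^ k ∣ sigma1 n := by
    obtain ⟨m, rfl⟩ := hqn
    have hqm : ¬ q ∣ m := by
      rintro ⟨c, rfl⟩
      exact hb q hTq ⟨c, by ring⟩
    rw [sigma1_mul ((Nat.Prime.coprime_iff_not_dvd hq).2 hqm), sigma1_prime hq]
    exact hD.mul_right _
  unfold KFree
  have key : ∀ p, p.Prime → (p ^ k ∣ n ↔ p ^ k ∣ s n) := by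
    intro p hp
    by_cases hpT : p ≤ T
    · have h1 : p ^ k ∣ sigma1 n := 
        (pow_dvd_pow_of_dvd ((Nat.Prime.dvd_factorial hp).2 hpT) k).trans hsig
      rw [← s_add] at h1
      exact ⟨fun h => (Nat.dvd_add_left h).1 h1, fun h => (Nat.dvd_add_right h).1 h1⟩
    · have h2 : ¬ p ^ 2 ∣ n := hb p (by omega)
      constructor
      · intro h; exact absurd ((pow_dvd_pow p (by omega)).trans h) h2
      · intro h; exact absurd (hcon p hp (by omega) ((pow_dvd_pow p hk).trans h)) h2
  constructor
  · intro h p hp hd; exact h p hp ((key p hp).2 hd)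
  · intro h p hp hd; exact h p hp ((key p hp).1 hd)

lemma density_bound (k : ℕ) (hk : 4 ≤ k) (ε : ℝ) (hε : 0 < ε) : 
    ∃ N₀ : ℕ, ∀ N, N₀ ≤ N → cnt N (fun n => ¬ (KFree k n ↔ KFree k (s n))) ≤ ε * N := by
  obtain ⟨i₁, hA⟩ := rangeA
  obtain ⟨i₂, hi₂⟩ := exists_pow_lt_of_lt_one (show 0 < ε / (5 * 1168) by positivity) 
    (show (1 / 2 : ℝ) < 1 by norm_num)
  set i₀ := max i₁ i₂ with hi₀
  have hpow : (1 / 2 : ℝ) ^ i₀ ≤ ε / (5 * 1168) := 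
    (pow_le_pow_of_le_one (by norm_num) (by norm_num) (le_max_right i₁ i₂)).trans hi₂.le
  set T := (2 ^ 2 ^ i₀) ^ 10 with hT
  have hT2 : 2 ^ i₀ ≤ T := by
    have h3 : 2 ^ i₀ < 2 ^ 2 ^ i₀ := Nat.lt_two_pow_self.trans_le 
      (Nat.pow_le_pow_right (by norm_num) le_rfl)
    exact h3.le.trans (Nat.le_self_pow (by norm_num) _)
  have hA' := fun N l => hA i₀ N l (le_max_left _ _)
  rw [← hT] at hA'
  clear_value T i₀
  have hT1 : 1 ≤ T := le_trans Nat.one_le_two_pow hT2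
  have hTR : (1 : ℝ) / T ≤ ε / 5 := by
    have h1 : (2 : ℝ) ^ i₀ ≤ T := by exact_mod_cast hT2
    calc (1 : ℝ) / T ≤ 1 / 2 ^ i₀ := by gcongr
      _ = (1 / 2) ^ i₀ := by rw [one_div_pow]
      _ ≤ ε / (5 * 1168) := hpow
      _ ≤ ε / 5 := by gcongr; norm_num
  obtain ⟨S, hS, hSK⟩ := exists_primes_dvd_succ (T.factorial ^ k) T 
    (Nat.one_le_pow _ _ (Nat.factorial_pos T)) (15 / ε)
  obtain ⟨l₀, hl₀⟩ := exists_nat_gt (5 * 31 / ε)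
  refine ⟨16 ^ (l₀ + T ^ 12 + 20) + S.card, fun N hN => ?_⟩
  have hN0 : N ≠ 0 := by
    have : 0 < 16 ^ (l₀ + T ^ 12 + 20) := by positivity
    omega
  have hN1 := Nat.pow_log_le_self 16 hN0
  have hN2 := (Nat.lt_pow_succ_log_self (b := 16) (by norm_num) N).le
  have hl : l₀ + T ^ 12 + 20 ≤ Nat.log 16 N := Nat.le_log_of_pow_le (by norm_num) (by omega)
  set l := Nat.log 16 N with hldef
  clear_value l
  have hT6 : T ^ 6 < l ^ 10 := by
    have h1 : T ^ 6 ≤ T ^ 12 := Nat.pow_le_pow_right hT1 (by norm_num)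
    have h2 : l ≤ l ^ 10 := Nat.le_self_pow (by norm_num) _
    omega
  have hbig : l ^ 14 * T ^ 12 < N ^ 3 := by
    have h1 : l ^ 14 * T ^ 12 ≤ l ^ 14 * l := Nat.mul_le_mul_left _ (by omega)
    have h2 : l ^ 5 < 16 ^ l := by
      have h3 : ∀ j : ℕ, (j + 20) ^ 5 < 16 ^ (j + 20) := by
        intro j
        induction j with
        | zero => norm_num
        | succ j ih =>
          have h4 : (j + 1 + 20) ≤ (j + 20) * 2 - 19 := by omega
          have h5 : (20 * (j + 1 + 20)) ^ 5 ≤ (21 * (j + 20)) ^ 5 := Nat.pow_le_pow_left (by omega) 5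
          rw [mul_pow, mul_pow] at h5
          have h6 : 16 ^ (j + 1 + 20) = 16 * 16 ^ (j + 20) := by ring
          omega
      have := h3 (l - 20)
      rwa [Nat.sub_add_cancel (by omega)] at this
    calc l ^ 14 * T ^ 12 ≤ l ^ 14 * l := h1
      _ = (l ^ 5) ^ 3 := by ring
      _ < (16 ^ l) ^ 3 := Nat.pow_lt_pow_left h2 (by norm_num)
      _ ≤ N ^ 3 := Nat.pow_le_pow_left hN1 3
  have hC := rangeC hN1 hN2 (by omega) hT6 hbig
  have hAA := hA' N l hN1
  have hB := cnt_sq N T hT1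
  have hTu := turan N S (fun q hq => (hS q hq).1)
  have hNR : (0 : ℝ) ≤ N := by positivity
  have c1 : cnt N (fun n => ∀ q ∈ S, ¬ q ∣ n) ≤ ε / 5 * N := by
    have h0 : (S.card : ℝ) ≤ N := by
      have : S.card ≤ N := le_trans (Nat.le_add_left _ _) hN
      exact_mod_cast this
    have h2 : cnt N (fun n => ∀ q ∈ S, ¬ q ∣ n) * (15 / ε) ≤ (ε / 5 * N) * (15 / ε) := by
      calc _ ≤ cnt N (fun n => ∀ q ∈ S, ¬ q ∣ n) * ∑ q ∈ S, (1 : ℝ) / q :=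
            mul_le_mul_of_nonneg_left hSK (cnt_nonneg _ _)
        _ ≤ N + 2 * S.card := hTu
        _ ≤ 3 * N := by linarith
        _ = _ := by field_simp; norm_num
    exact le_of_mul_le_mul_right h2 (by positivity)
  have c2 : (N : ℝ) / T ≤ ε / 5 * N := by
    calc (N : ℝ) / T = 1 / T * N := by ring
      _ ≤ _ := by gcongr
  have c3 : 1168 * (N * (1 / 2 : ℝ) ^ i₀) ≤ ε / 5 * N := by
    calc 1168 * (N * (1 / 2 : ℝ) ^ i₀) ≤ 1168 * (N * (ε / (5 * 1168))) := by gcongr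
      _ = _ := by ring
  have c4 : 31 * ((N : ℝ) / l) ≤ ε / 5 * N := by
    have h1 : (5 * 31 / ε : ℝ) ≤ l := by
      refine hl₀.le.trans ?_
      have : l₀ ≤ l := by omega
      exact_mod_cast this
    have h2 : (0 : ℝ) < 5 * 31 / ε := by positivity
    calc 31 * ((N : ℝ) / l) ≤ 31 * ((N : ℝ) / (5 * 31 / ε)) := by gcongr
      _ = _ := by field_simp
  have hstep : cnt N (fun n => ¬ (KFree k n ↔ KFree k (s n))) ≤ 
      cnt N (fun n => (∃ b, T < b ∧ b ^ 2 ∣ n) ∨ ((∀ q ∈ S, ¬ q ∣ n) ∨ 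
        (((∀ b, T < b → ¬ b ^ 2 ∣ n) ∧ 
          ∃ p, p.Prime ∧ T < p ∧ p < l ^ 10 ∧ p ^ 4 ∣ s n ∧ ¬ p ^ 2 ∣ n) ∨
        ((∀ b, T < b → ¬ b ^ 2 ∣ n) ∧ 
          ∃ p, p.Prime ∧ l ^ 10 ≤ p ∧ p ^ 4 ∣ s n ∧ ¬ p ^ 2 ∣ n)))) := by
    apply cnt_mono
    intro n hn1 hnN hbad
    by_cases d1 : ∃ b, T < b ∧ b ^ 2 ∣ n
    · exact Or.inl d1
    by_cases d2 : ∀ q ∈ S, ¬ q ∣ n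
    · exact Or.inr (Or.inl d2)
    push Not at d1 d2
    obtain ⟨q, hqS, hqn⟩ := d2
    obtain ⟨hq, hTq, hDq⟩ := hS q hqS
    obtain ⟨p, hp, hTp, h4, h2⟩ := small_primes hk d1 hq hTq hDq hqn hbad
    right; right
    by_cases d3 : p < l ^ 10
    · exact Or.inl ⟨d1, p, hp, hTp, d3, h4, h2⟩
    · exact Or.inr ⟨d1, p, hp, by omega, h4, h2⟩
  have o1 := hstep.trans (cnt_or _ _ _)
  have o2 := o1.trans (add_le_add_right (cnt_or _ _ _) _)
  have o3 := o2.trans (add_le_add_right (add_le_add_right (cnt_or _ _ _) _) _)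
  have : 0 ≤ ε * N := by positivity
  linarith

theorem kfree_iff_kfree_s_ae (k : ℕ) (hk : 4 ≤ k) :
    (fun x : ℝ => (((Finset.Icc 1 ⌊x⌋₊).filter
        (fun n => ¬ (KFree k n ↔ KFree k (s n)))).card : ℝ))
      =o[atTop] (fun x : ℝ => x) := by
  rw [Asymptotics.isLittleO_iff]
  intro ε hε
  obtain ⟨N₀, hN₀⟩ := density_bound k hk ε hε
  filter_upwards [eventually_ge_atTop (N₀ : ℝ), eventually_ge_atTop (0 : ℝ)] with x hx hx0
  have h1 := hN₀ ⌊x⌋₊ (Nat.le_floor hx)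
  unfold cnt at h1
  rw [Real.norm_of_nonneg (by positivity), Real.norm_of_nonneg hx0]
  refine le_trans ?_ (h1.trans (mul_le_mul_of_nonneg_left (Nat.floor_le hx0) hε.le))
  apply le_of_eq
  congr!
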